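/- arXiv:0907.3740 — 8 statements merged into one kernel-verified Lean document; each statement's English description precedes it below -/
import Mathlib

section
/- Let n ≥ 2 and let X = (X_1, ..., X_n) be a vector of independent (not necessarily identically distributed) random variables with values in [0,1]. Then for every δ > 0, Pr{ sqrt(V_n(X)) > sqrt(E[V_n(X)]) + sqrt(2 ln(1/δ) / (n−1)) } ≤ δ. -/
/-!
The function `g = √Vₙ` is a Euclidean seminorm, hence convex, and it is Lipschitz with constant
`1/√(n-1)` for the Euclidean distance. The claim is therefore an instance of the upper-tail
concentration inequality for convex Lipschitz functions under product measures on `[0,1]ⁿ`,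
combined with `𝔼 √Vₙ ≤ √(𝔼 Vₙ)`.

The concentration inequality is obtained from the infimum-convolution inequality
`∫ exp (Q f) ≤ exp (∫ f)` for convex `f`, where `Q f x = inf_y (f y + |x - y|² / 2)`. To avoid
measurability questions about `Q f`, the inequality is stated for an arbitrary measurable function
`k` below all the functions `x ↦ exp (f y + |x - y|² / 2)`.

* In dimension one (`infConv_one`), let `y₀` minimise `f` on `[0,1]` and put
  `v = f x - f y₀ ≥ 0`. Testing with `y = (1 - t) x + t y₀` gives
  `Q f x ≤ f y₀ + (1 - t) v + t² / 2`, and for a suitable `t` the exponential of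
  `(1 - t) v + t² / 2` is at most `1 + v`. Integrating,
  `∫ exp (Q f) ≤ exp (f y₀) (1 + ∫ f - f y₀) ≤ exp (∫ f)`.
* The inequality tensorises (`infConv_pi`), by integrating out all coordinates but the first.

Applied to `f = s g`, it bounds the moment generating function of `g`, and the tail bound follows
from Markov's inequality with the optimal `s`.
-/

open MeasureTheory

/-- Sample mean `P_n(x) = (1/n) ∑ᵢ xᵢ`. -/
noncomputable def sampleMean (n : ℕ) (x : Fin n → ℝ) : ℝ := (∑ i, x i) / n

/-- Sample variance `V_n(x) = (1/(n(n-1))) ∑_{i<j} (xᵢ - xⱼ)² = (1/(2n(n-1))) ∑_{i,j} (xᵢ - xⱼ)²`. -/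
noncomputable def sampleVar (n : ℕ) (x : Fin n → ℝ) : ℝ :=
  (∑ i, ∑ j, (x i - x j) ^ 2) / (2 * (n : ℝ) * ((n : ℝ) - 1))

lemma ae_mem_cube {n : ℕ} (μ : Fin n → Measure ℝ) [∀ i, IsProbabilityMeasure (μ i)]
    (hrange : ∀ i, ∀ᵐ x ∂μ i, x ∈ Set.Icc (0 : ℝ) 1) :
    ∀ᵐ x ∂Measure.pi μ, x ∈ Set.Icc (0 : Fin n → ℝ) 1 := by
  have h : ∀ᵐ x ∂Measure.pi μ, ∀ i, x i ∈ Set.Icc (0 : ℝ) 1 := by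
    rw [ae_all_iff]
    intro i
    exact (measurePreserving_eval μ i).quasiMeasurePreserving.ae (hrange i)
  filter_upwards [h] with x hx
  exact ⟨fun i => (hx i).1, fun i => (hx i).2⟩

lemma integrable_of_cube {E : Type*} [TopologicalSpace E] [MeasurableSpace E]
    [OpensMeasurableSpace E] (ν : Measure E) [IsFiniteMeasure ν] {s : Set E} (hs : IsCompact s)
    (hν : ∀ᵐ x ∂ν, x ∈ s) {f : E → ℝ} (hf : Continuous f) : Integrable f ν := by
  obtain ⟨C, hC⟩ := hs.exists_bound_of_continuousOn hf.continuousOn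
  refine Integrable.of_bound hf.measurable.aestronglyMeasurable C ?_
  filter_upwards [hν] with x hx using hC x hx

/-- The minimum over `t ∈ [0,1]` of `(1 - t) v + t² / 2` is at most `log (1 + v)`. -/
lemma exists_interp (v : ℝ) (hv : 0 ≤ v) :
    ∃ t ∈ Set.Icc (0 : ℝ) 1, Real.exp ((1 - t) * v + t ^ 2 / 2) ≤ 1 + v := by
  rcases le_total v 1 with h | h
  · refine ⟨v, ⟨hv, h⟩, ?_⟩
    have h1 := Real.le_log_one_add_of_nonneg hv
    have h2 : v - v ^ 2 / 2 ≤ 2 * v / (v + 2) := by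
      rw [le_div_iff₀ (by linarith)]
      nlinarith [pow_nonneg hv 3]
    rw [← Real.le_log_iff_exp_le (by linarith)]
    nlinarith
  · refine ⟨1, ⟨zero_le_one, le_rfl⟩, ?_⟩
    have h1 : Real.exp (1 / 2) ≤ 2 := by
      have := Real.exp_one_lt_d9
      have h2 : Real.exp (1 / 2) * Real.exp (1 / 2) = Real.exp 1 := by
        rw [← Real.exp_add]; norm_num
      nlinarith [Real.exp_pos (1 / 2)]
    norm_num at *
    linarith

/-- The infimum-convolution inequality in dimension one. -/
lemma infConv_one (ν : Measure ℝ) [IsProbabilityMeasure ν]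
    (hν : ∀ᵐ x ∂ν, x ∈ Set.Icc (0 : ℝ) 1) (g : ℝ → ℝ) (hg : ConvexOn ℝ Set.univ g)
    (hc : Continuous g) (k : ℝ → ENNReal)
    (hk : ∀ x ∈ Set.Icc (0 : ℝ) 1, ∀ y ∈ Set.Icc (0 : ℝ) 1,
      k x ≤ ENNReal.ofReal (Real.exp (g y + (x - y) ^ 2 / 2))) :
    ∫⁻ x, k x ∂ν ≤ ENNReal.ofReal (Real.exp (∫ x, g x ∂ν)) := by
  obtain ⟨y₀, hy₀, hmin⟩ := isCompact_Icc.exists_isMinOn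
    (Set.nonempty_Icc.2 (zero_le_one (α := ℝ))) hc.continuousOn
  have hint : Integrable g ν := integrable_of_cube ν isCompact_Icc hν hc
  have hint' : Integrable (fun x => Real.exp (g y₀) * (1 + (g x - g y₀))) ν :=
    ((integrable_const _).add (hint.sub (integrable_const _))).const_mul _
  have hpt : ∀ᵐ x ∂ν, k x ≤ ENNReal.ofReal (Real.exp (g y₀) * (1 + (g x - g y₀))) := by
    filter_upwards [hν] with x hx
    obtain ⟨t, ht, hexp⟩ := exists_interp (g x - g y₀) (sub_nonneg.2 (hmin hx))
    have hmem : (1 - t) * x + t * y₀ ∈ Set.Icc (0 : ℝ) 1 :=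
      (convex_Icc (0 : ℝ) 1) hx hy₀ (by linarith [ht.2]) ht.1 (by ring)
    refine (hk x hx _ hmem).trans (ENNReal.ofReal_le_ofReal ?_)
    have hconv : g ((1 - t) * x + t * y₀) ≤ (1 - t) * g x + t * g y₀ :=
      hg.2 (Set.mem_univ x) (Set.mem_univ y₀) (by linarith [ht.2]) ht.1 (by ring)
    have hsq : (x - ((1 - t) * x + t * y₀)) ^ 2 ≤ t ^ 2 := by
      have : (x - y₀) ^ 2 ≤ 1 := by
        rw [sq_le_one_iff_abs_le_one, abs_le]
        constructor <;> linarith [hx.1, hx.2, hy₀.1, hy₀.2]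
      nlinarith [sq_nonneg t]
    calc Real.exp (g ((1 - t) * x + t * y₀) + (x - ((1 - t) * x + t * y₀)) ^ 2 / 2)
        ≤ Real.exp (g y₀ + ((1 - t) * (g x - g y₀) + t ^ 2 / 2)) := by
          apply Real.exp_le_exp.2; nlinarith
      _ ≤ _ := by
          rw [Real.exp_add]
          exact mul_le_mul_of_nonneg_left hexp (Real.exp_pos _).le
  refine (lintegral_mono_ae hpt).trans ?_
  rw [← ofReal_integral_eq_lintegral_ofReal hint']
  · apply ENNReal.ofReal_le_ofReal
    have hsub : Integrable (fun x => g x - g y₀) ν := hint.sub (integrable_const _)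
    rw [integral_const_mul, integral_add (integrable_const _) hsub,
      integral_sub hint (integrable_const _)]
    simp only [integral_const, probReal_univ, smul_eq_mul, one_mul]
    calc Real.exp (g y₀) * (1 + (∫ x, g x ∂ν - g y₀))
        ≤ Real.exp (g y₀) * Real.exp (∫ x, g x ∂ν - g y₀) := by
          apply mul_le_mul_of_nonneg_left _ (Real.exp_pos _).le
          linarith [Real.add_one_le_exp (∫ x, g x ∂ν - g y₀)]
      _ = _ := by rw [← Real.exp_add]; ring_nf
  · filter_upwards [hν] with x hx
    have : g y₀ ≤ g x := hmin hx
    exact mul_nonneg (Real.exp_pos _).le (by linarith)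

/-- The infimum-convolution inequality for product measures on the unit cube. The Lipschitz
hypothesis (for the sup norm, with an arbitrary constant) only serves to keep partial integrals
of `f` continuous. -/
lemma infConv_pi (n : ℕ) : ∀ (μ : Fin n → Measure ℝ) [∀ i, IsProbabilityMeasure (μ i)]
    (_ : ∀ i, ∀ᵐ x ∂μ i, x ∈ Set.Icc (0 : ℝ) 1) (f : (Fin n → ℝ) → ℝ)
    (_ : ConvexOn ℝ Set.univ f) (K : NNReal) (_ : LipschitzWith K f)
    (k : (Fin n → ℝ) → ENNReal) (_ : Measurable k)
    (_ : ∀ x ∈ Set.Icc (0 : Fin n → ℝ) 1, ∀ y ∈ Set.Icc (0 : Fin n → ℝ) 1,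
      k x ≤ ENNReal.ofReal (Real.exp (f y + (∑ i, (x i - y i) ^ 2) / 2))),
    ∫⁻ x, k x ∂Measure.pi μ ≤ ENNReal.ofReal (Real.exp (∫ x, f x ∂Measure.pi μ)) := by
  induction n with
  | zero =>
    intro μ _ _ f _ K _ k _ hk
    have h0 := hk 0 ⟨le_rfl, zero_le_one⟩ 0 ⟨le_rfl, zero_le_one⟩
    have hd : Measure.pi μ = Measure.dirac 0 := by
      rw [Measure.pi_of_empty μ 0]
    rw [hd, lintegral_dirac, integral_dirac]
    simpa using h0
  | succ n ih =>
    intro μ _ hr f hf K hK k hkm hk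
    set μ' : Fin n → Measure ℝ := fun i => μ i.succ with hμ'
    have hmp : MeasurePreserving (fun p : ℝ × (Fin n → ℝ) => (Fin.cons p.1 p.2 : Fin (n+1) → ℝ))
        ((μ 0).prod (Measure.pi μ')) (Measure.pi μ) := by
      have := (measurePreserving_piFinSuccAbove μ 0).symm
      have he : (fun p : ℝ × (Fin n → ℝ) => (Fin.cons p.1 p.2 : Fin (n+1) → ℝ)) =
          (MeasurableEquiv.piFinSuccAbove (fun _ => ℝ) 0).symm := by
        ext p i
        simp [MeasurableEquiv.piFinSuccAbove, Fin.insertNthEquiv]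
      rw [he]
      simpa only [Fin.succAbove_zero] using this
    have hcube' := ae_mem_cube μ' (fun i => hr i.succ)
    have hcontcons : Continuous
        (fun p : ℝ × (Fin n → ℝ) => (Fin.cons p.1 p.2 : Fin (n+1) → ℝ)) := by
      fun_prop
    have hsec : ∀ y : ℝ, LipschitzWith K (fun y' : Fin n → ℝ => f (Fin.cons y y')) := by
      intro y
      refine LipschitzWith.of_dist_le_mul fun a b => (hK.dist_le_mul _ _).trans ?_
      gcongr
      rw [dist_pi_le_iff dist_nonneg]
      intro i
      refine Fin.cases ?_ (fun j => ?_) i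
      · simp
      · simpa using dist_le_pi_dist a b j
    have hsecint : ∀ y : ℝ, Integrable (fun y' : Fin n → ℝ => f (Fin.cons y y'))
        (Measure.pi μ') := fun y =>
      integrable_of_cube _ isCompact_Icc hcube' (hsec y).continuous
    set g : ℝ → ℝ := fun y => ∫ y', f (Fin.cons y y') ∂Measure.pi μ' with hgdef
    have hgconv : ConvexOn ℝ Set.univ g := by
      refine ⟨convex_univ, fun a _ b _ s t hs ht hst => ?_⟩
      simp only [hgdef, smul_eq_mul]
      rw [← integral_const_mul, ← integral_const_mul,
        ← integral_add ((hsecint a).const_mul s) ((hsecint b).const_mul t)]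
      refine integral_mono (hsecint _) (((hsecint a).const_mul s).add ((hsecint b).const_mul t)) ?_
      intro y'
      have h := hf.2 (Set.mem_univ (Fin.cons a y' : Fin (n+1) → ℝ))
        (Set.mem_univ (Fin.cons b y' : Fin (n+1) → ℝ)) hs ht hst
      have he : (s • (Fin.cons a y' : Fin (n+1) → ℝ) + t • (Fin.cons b y' : Fin (n+1) → ℝ))
          = Fin.cons (s * a + t * b) y' := by
        ext i
        refine Fin.cases ?_ (fun j => ?_) i
        · simp
        · simp [← add_mul, hst]
      rw [he] at h
      simpa using h
    have hglip : LipschitzWith K g := by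
      refine LipschitzWith.of_dist_le_mul fun a b => ?_
      rw [Real.dist_eq, hgdef]
      simp only
      rw [← integral_sub (hsecint a) (hsecint b), ← Real.norm_eq_abs]
      refine (norm_integral_le_of_norm_le_const (C := K * dist a b)
        (Filter.Eventually.of_forall fun y' => ?_)).trans (by simp)
      rw [← dist_eq_norm]
      refine (hK.dist_le_mul _ _).trans ?_
      gcongr
      rw [dist_pi_le_iff dist_nonneg]
      intro i
      refine Fin.cases ?_ (fun j => ?_) i
      · simp
      · simp
    have hcube := ae_mem_cube μ hr
    have hfint : Integrable f (Measure.pi μ) :=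
      integrable_of_cube _ isCompact_Icc hcube hK.continuous
    have hI : ∫ x, f x ∂Measure.pi μ = ∫ y, g y ∂μ 0 := by
      rw [← hmp.map_eq, integral_map hmp.aemeasurable hK.continuous.measurable.aestronglyMeasurable]
      rw [integral_prod]
      exact hmp.integrable_comp_of_integrable hfint
    rw [hI, ← hmp.lintegral_comp hkm,
      lintegral_prod (fun p : ℝ × (Fin n → ℝ) => k (Fin.cons p.1 p.2))
        (hkm.comp hmp.measurable).aemeasurable]
    refine infConv_one (μ 0) (hr 0) g hgconv hglip.continuous _ ?_
    intro x hx y hy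
    -- The one-dimensional cost `(x - y)² / 2` is absorbed into the function of the remaining
    -- coordinates, which stays convex and Lipschitz.
    have hfc : ConvexOn ℝ Set.univ
        (fun y' : Fin n → ℝ => f (Fin.cons y y') + (x - y) ^ 2 / 2) := by
      refine ⟨convex_univ, fun a _ b _ s t hs ht hst => ?_⟩
      have h := hf.2 (Set.mem_univ (Fin.cons y a : Fin (n+1) → ℝ))
        (Set.mem_univ (Fin.cons y b : Fin (n+1) → ℝ)) hs ht hst
      have he : (s • (Fin.cons y a : Fin (n+1) → ℝ) + t • (Fin.cons y b : Fin (n+1) → ℝ))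
          = Fin.cons y (s • a + t • b) := by
        ext i
        refine Fin.cases ?_ (fun j => ?_) i
        · simp [← add_mul, hst]
        · simp
      rw [he] at h
      simp only [smul_eq_mul] at h ⊢
      have : s * ((x - y) ^ 2 / 2) + t * ((x - y) ^ 2 / 2) = (x - y) ^ 2 / 2 := by
        rw [← add_mul, hst, one_mul]
      linarith
    have hfl : LipschitzWith K (fun y' : Fin n → ℝ => f (Fin.cons y y') + (x - y) ^ 2 / 2) := by
      refine LipschitzWith.of_dist_le_mul fun a b => ?_
      rw [dist_add_right]
      exact (hsec y).dist_le_mul a b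
    have hmain := ih μ' (fun i => hr i.succ) _ hfc K hfl (fun x' => k (Fin.cons x x'))
      (hkm.comp (hcontcons.measurable.comp measurable_prodMk_left)) ?_
    · rw [integral_add (hsecint y) (integrable_const _)] at hmain
      simpa using hmain
    · intro x' hx' y' hy'
      refine (hk (Fin.cons x x') ?_ (Fin.cons y y') ?_).trans_eq ?_
      · constructor <;> intro i <;> refine Fin.cases ?_ (fun j => ?_) i
        · simpa using hx.1
        · simpa using hx'.1 j
        · simpa using hx.2
        · simpa using hx'.2 j
      · constructor <;> intro i <;> refine Fin.cases ?_ (fun j => ?_) i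
        · simpa using hy.1
        · simpa using hy'.1 j
        · simpa using hy.2
        · simpa using hy'.2 j
      · rw [Fin.sum_univ_succ]
        simp only [Fin.cons_zero, Fin.cons_succ]
        ring_nf

/-- The linear map `x ↦ ((xᵢ - xⱼ) / √(2n(n-1)))ᵢⱼ`, whose Euclidean norm is `√Vₙ(x)`. -/
noncomputable def diffMap (n : ℕ) : (Fin n → ℝ) →ₗ[ℝ] EuclideanSpace ℝ (Fin n × Fin n) where
  toFun x := WithLp.toLp 2 fun p => (x p.1 - x p.2) / Real.sqrt (2 * (n : ℝ) * ((n : ℝ) - 1))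
  map_add' x y := by ext p; simp; ring
  map_smul' c x := by ext p; simp; ring

lemma norm_diffMap (n : ℕ) (hn : 2 ≤ n) (x : Fin n → ℝ) :
    ‖diffMap n x‖ = Real.sqrt (sampleVar n x) := by
  have hn' : (2 : ℝ) ≤ n := by exact_mod_cast hn
  have h : (0 : ℝ) ≤ 2 * (n : ℝ) * ((n : ℝ) - 1) := by nlinarith
  rw [EuclideanSpace.norm_eq]
  congr 1
  simp only [diffMap, LinearMap.coe_mk, AddHom.coe_mk, Real.norm_eq_abs, sq_abs, div_pow,
    Real.sq_sqrt h, sampleVar]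
  rw [Fintype.sum_prod_type, Finset.sum_div]
  simp_rw [Finset.sum_div]

lemma sampleVar_le (n : ℕ) (hn : 2 ≤ n) (x : Fin n → ℝ) :
    sampleVar n x ≤ (∑ i, x i ^ 2) / ((n : ℝ) - 1) := by
  have hn' : (2 : ℝ) ≤ n := by exact_mod_cast hn
  have hsum : ∑ i, ∑ j, (x i - x j) ^ 2 = 2 * n * ∑ i, x i ^ 2 - 2 * (∑ i, x i) ^ 2 := by
    simp only [sub_sq, Finset.sum_add_distrib, Finset.sum_sub_distrib, Finset.sum_const,
      Finset.card_univ, Fintype.card_fin, nsmul_eq_mul, ← Finset.mul_sum, ← Finset.sum_mul]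
    ring
  rw [sampleVar, hsum, div_le_div_iff₀ (by nlinarith) (by linarith)]
  nlinarith [mul_nonneg (sq_nonneg (∑ i, x i)) (by linarith : (0 : ℝ) ≤ (n : ℝ) - 1)]

/-- **Theorem 11, (9)**: lower confidence bound for the standard deviation. For independent
(not necessarily identically distributed) `[0,1]`-valued `X₁, …, Xₙ`, `n ≥ 2`, `δ > 0`:
`Pr{ √(Vₙ(𝐗)) > √(𝔼Vₙ) + √(2 ln(1/δ)/(n-1)) } ≤ δ`. -/
theorem stdev_lower_bound (n : ℕ) (hn : 2 ≤ n)
    (μ : Fin n → Measure ℝ) [∀ i, IsProbabilityMeasure (μ i)]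
    (hrange : ∀ i, ∀ᵐ x ∂μ i, x ∈ Set.Icc (0 : ℝ) 1) (δ : ℝ) (hδ : 0 < δ) :
    ((Measure.pi μ)
      {X | Real.sqrt (sampleVar n X) >
        Real.sqrt (∫ z, sampleVar n z ∂Measure.pi μ) +
          Real.sqrt (2 * Real.log (1 / δ) / ((n : ℝ) - 1))}).toReal ≤ δ := by
  rcases le_or_gt 1 δ with h1 | h1
  · refine le_trans ?_ h1
    exact measureReal_le_one
  have hn' : (2 : ℝ) ≤ n := by exact_mod_cast hn
  have hn1 : (0 : ℝ) < (n : ℝ) - 1 := by linarith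
  have hlog : 0 < Real.log (1 / δ) := Real.log_pos (by rw [lt_div_iff₀ hδ]; linarith)
  set r := Real.sqrt (2 * Real.log (1 / δ) / ((n : ℝ) - 1)) with hr
  have hr0 : 0 ≤ r := Real.sqrt_nonneg _
  have hr2 : r ^ 2 * ((n : ℝ) - 1) = 2 * Real.log (1 / δ) := by
    rw [hr, Real.sq_sqrt (by positivity)]; field_simp
  set g : (Fin n → ℝ) → ℝ := fun x => ‖diffMap n x‖ with hg
  have hgV : ∀ x, g x = Real.sqrt (sampleVar n x) := norm_diffMap n hn
  have hVnn : ∀ x, 0 ≤ sampleVar n x := fun x =>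
    div_nonneg (Finset.sum_nonneg fun i _ => Finset.sum_nonneg fun j _ => sq_nonneg _)
      (by nlinarith)
  have hg2 : ∀ x, g x ^ 2 = sampleVar n x := fun x => by
    rw [hgV, Real.sq_sqrt (hVnn x)]
  have hglip : LipschitzWith ‖(diffMap n).toContinuousLinearMap‖₊ g := by
    have := lipschitzWith_one_norm.comp ((diffMap n).toContinuousLinearMap).lipschitz
    rw [one_mul] at this
    exact this
  have hgc : Continuous g := hglip.continuous
  have hgconv : ConvexOn ℝ Set.univ g := by
    exact (convexOn_norm convex_univ).comp_linearMap (diffMap n)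
  have hcube := ae_mem_cube μ hrange
  have hgint : Integrable g (Measure.pi μ) := integrable_of_cube _ isCompact_Icc hcube hgc
  have hg2int : Integrable (fun x => g x ^ 2) (Measure.pi μ) :=
    integrable_of_cube _ isCompact_Icc hcube (hgc.pow 2)
  set m := ∫ x, g x ∂Measure.pi μ with hm
  have hjensen : m ≤ Real.sqrt (∫ z, sampleVar n z ∂Measure.pi μ) := by
    apply Real.le_sqrt_of_sq_le
    have h0 : 0 ≤ ∫ x, (g x - m) ^ 2 ∂Measure.pi μ := integral_nonneg fun x => sq_nonneg _
    have h2 : ∫ x, (g x - m) ^ 2 ∂Measure.pi μ = (∫ x, g x ^ 2 ∂Measure.pi μ) - m ^ 2 := by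
      have : ∀ x, (g x - m) ^ 2 = g x ^ 2 - (2 * m * g x - m ^ 2) := fun x => by ring
      simp_rw [this]
      have hlin : Integrable (fun x => 2 * m * g x - m ^ 2) (Measure.pi μ) :=
        (hgint.const_mul _).sub (integrable_const _)
      rw [integral_sub hg2int hlin,
        integral_sub (hgint.const_mul _) (integrable_const _), integral_const_mul]
      simp [← hm]
      ring
    simp_rw [hg2] at h2
    linarith
  -- The parameter minimising the exponent `-s r + s² / (2 (n - 1))` in the Chernoff bound.
  set s := r * ((n : ℝ) - 1) with hs
  have hs0 : 0 ≤ s := mul_nonneg hr0 hn1.le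
  set c := r ^ 2 * ((n : ℝ) - 1) / 2 with hc
  have hmgf := infConv_pi n μ hrange (fun x => s * g x) (by simpa using hgconv.smul hs0)
    (‖s‖₊ * ‖(diffMap n).toContinuousLinearMap‖₊)
    (by
      refine LipschitzWith.of_dist_le_mul fun a b => ?_
      have := hglip.dist_le_mul a b
      rw [Real.dist_eq, ← mul_sub, abs_mul, ← Real.dist_eq]
      push_cast
      rw [mul_assoc]
      exact mul_le_mul_of_nonneg_left this (abs_nonneg s))
    (fun x => ENNReal.ofReal (Real.exp (s * g x - c)))
    (by
      have : Continuous fun x => Real.exp (s * g x - c) := by fun_prop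
      exact this.measurable.ennreal_ofReal)
    (by
      intro x _ y _
      apply ENNReal.ofReal_le_ofReal
      apply Real.exp_le_exp.2
      have htri : g x - g y ≤ g (x - y) := by
        simp only [hg, map_sub]; exact norm_sub_norm_le _ _
      have hle : g (x - y) ^ 2 * ((n : ℝ) - 1) ≤ ∑ i, (x i - y i) ^ 2 := by
        rw [hg2]
        have := sampleVar_le n hn (x - y)
        rw [le_div_iff₀ hn1] at this
        simpa using this
      have hamgm : 0 ≤ (g (x - y) - r) ^ 2 * ((n : ℝ) - 1) := by positivity
      have := mul_le_mul_of_nonneg_left htri hs0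
      simp only [hc]
      nlinarith)
  rw [integral_const_mul, ← hm] at hmgf
  have hsub : {X | Real.sqrt (sampleVar n X) >
        Real.sqrt (∫ z, sampleVar n z ∂Measure.pi μ) + r} ⊆
      {X | ENNReal.ofReal (Real.exp (s * m + c)) ≤ ENNReal.ofReal (Real.exp (s * g X - c))} := by
    intro X hX
    simp only [Set.mem_ofPred_eq] at hX ⊢
    apply ENNReal.ofReal_le_ofReal
    apply Real.exp_le_exp.2
    rw [← hgV] at hX
    have h3 : m + r ≤ g X := by linarith
    have := mul_le_mul_of_nonneg_left h3 hs0
    have h4 : s * r = 2 * c := by simp only [hs, hc]; ring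
    nlinarith
  have hmark := mul_meas_ge_le_lintegral₀ (μ := Measure.pi μ)
    (f := fun X => ENNReal.ofReal (Real.exp (s * g X - c)))
    (by
      have : Continuous fun x => Real.exp (s * g x - c) := by fun_prop
      exact this.measurable.ennreal_ofReal.aemeasurable)
    (ENNReal.ofReal (Real.exp (s * m + c)))
  have hfin := (mul_le_mul_right (measure_mono hsub) _).trans (hmark.trans hmgf)
  have hreal := ENNReal.toReal_mono ENNReal.ofReal_ne_top hfin
  rw [ENNReal.toReal_mul, ENNReal.toReal_ofReal (Real.exp_pos _).le,
    ENNReal.toReal_ofReal (Real.exp_pos _).le, Real.exp_add, mul_assoc] at hreal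
  have h5 := le_of_mul_le_mul_left (hreal.trans_eq (mul_one _).symm) (Real.exp_pos _)
  have hexp : Real.exp c = 1 / δ := by
    rw [hc, hr2, mul_div_cancel_left₀ _ two_ne_zero, Real.exp_log (by positivity)]
  rw [hexp] at h5
  rw [one_div, inv_mul_le_iff₀ hδ, mul_one] at h5
  exact h5
end

section
/- Let n ≥ 2 and let X = (X_1, ..., X_n) be a vector of independent random variables with values in [0,1]. Then for every s > 0, Pr{ E[V_n(X)] − V_n(X) > s } ≤ exp( −(n−1) s² / (2 E[V_n(X)]) ). -/
/-!
The sample variance is the U-statistic with kernel `(x - y)² / 2`. By Hoeffding's representation it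
is the average, over all permutations `σ`, of the mean of the kernel over the `m = ⌊n/2⌋` disjoint
pairs `(σ (2k), σ (2k+1))` (`sum_matchSum`). For a fixed `σ` the pairs are independent and the
kernel lies in `[0, 1/2]`, so `exp (-u) ≤ 1 - u + u²/2` gives the one-sided sub-Gaussian bound
`𝔼 exp (t (v_σ - matchSum σ)) ≤ exp (t² v_σ / 4)` for `t ≥ 0`, where `v_σ` is the mean of
`matchSum σ` (`mgf_matching_le`).

The variables are not identically distributed, so `v_σ` depends on `σ`, and plain Jensen over the
uniform distribution of `σ` would produce the largest `v_σ`. Weighting instead by the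
standard-deviation proxies `√v_σ` shows that the average has variance proxy at most
`(avg √v_σ)² ≤ avg v_σ` (`mgf_avg_le`), and `avg v_σ = m 𝔼V`. Hence
`𝔼 exp (t (𝔼V - V)) ≤ exp (t² 𝔼V / (4m))` with `4m ≥ 2(n - 1)`, and Chernoff's bound finishes.
-/

open MeasureTheory

open ProbabilityTheory

/-- Half the squared difference of two coordinates: the kernel of the U-statistic `sampleVar`. -/
noncomputable def halfSq {n : ℕ} (i j : Fin n) (x : Fin n → ℝ) : ℝ := (x i - x j) ^ 2 / 2

lemma measurable_halfSq {n : ℕ} (i j : Fin n) : Measurable (halfSq i j) := by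
  unfold halfSq
  fun_prop

/-- On the support the kernel takes values in `[0, 1/2]`. -/
lemma halfSq_mem {n : ℕ} (μ : Fin n → Measure ℝ) [∀ i, IsProbabilityMeasure (μ i)]
    (hrange : ∀ i, ∀ᵐ x ∂μ i, x ∈ Set.Icc (0 : ℝ) 1) (i j : Fin n) :
    ∀ᵐ x ∂Measure.pi μ, halfSq i j x ∈ Set.Icc (0 : ℝ) (1 / 2) := by
  have key : ∀ i, ∀ᵐ x ∂Measure.pi μ, x i ∈ Set.Icc (0 : ℝ) 1 := fun i =>
    (Measure.quasiMeasurePreserving_eval μ i).ae (hrange i)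
  filter_upwards [key i, key j] with x hi hj
  refine ⟨by unfold halfSq; positivity, ?_⟩
  unfold halfSq
  nlinarith [hi.1, hi.2, hj.1, hj.2]

lemma exp_neg_le_quadratic {u : ℝ} (hu : 0 ≤ u) : Real.exp (-u) ≤ 1 - u + u ^ 2 / 2 := by
  have h := Real.quadratic_le_exp_of_nonneg hu
  rw [Real.exp_neg, inv_le_iff_one_le_mul₀ (Real.exp_pos u)]
  have h2 : 0 ≤ 1 - u + u ^ 2 / 2 := by nlinarith [sq_nonneg (u - 1)]
  nlinarith [mul_le_mul_of_nonneg_left h h2, sq_nonneg (u ^ 2)]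

/-- One-sided Bernstein-type bound: a variable in `[0, 1/2]` satisfies `W² ≤ W / 2`, which turns
the second-order term of `exp (-θ W)` into a multiple of the mean. -/
lemma mgf_neg_le {Ω : Type*} [MeasurableSpace Ω] (P : Measure Ω) [IsProbabilityMeasure P]
    {W : Ω → ℝ} (hW : Measurable W) (hb : ∀ᵐ x ∂P, W x ∈ Set.Icc (0 : ℝ) (1 / 2))
    {θ : ℝ} (hθ : 0 ≤ θ) :
    mgf W P (-θ) ≤ Real.exp ((-θ + θ ^ 2 / 4) * ∫ x, W x ∂P) := by
  have hint : Integrable W P := Integrable.of_mem_Icc 0 (1 / 2) hW.aemeasurable hb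
  calc mgf W P (-θ) ≤ ∫ x, (1 + (-θ + θ ^ 2 / 4) * W x) ∂P := by
        refine integral_mono_ae (integrable_exp_mul_of_mem_Icc hW.aemeasurable hb)
          ((integrable_const 1).add (hint.const_mul _)) ?_
        filter_upwards [hb] with x hx
        have h := exp_neg_le_quadratic (mul_nonneg hθ hx.1)
        have h2 : W x ^ 2 ≤ W x / 2 := by nlinarith [hx.1, hx.2]
        have h3 := mul_le_mul_of_nonneg_left h2 (sq_nonneg θ)
        simp only [neg_mul]
        nlinarith
    _ = 1 + (-θ + θ ^ 2 / 4) * ∫ x, W x ∂P := by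
        rw [integral_add (integrable_const 1) (hint.const_mul _), integral_const_mul]
        simp
    _ ≤ _ := by
        rw [add_comm]
        exact Real.add_one_le_exp _

/-- Kernels evaluated on disjoint pairs of coordinates are independent, so the bound for one pair
multiplies over a matching. -/
lemma mgf_matching_le {n : ℕ} (μ : Fin n → Measure ℝ) [∀ i, IsProbabilityMeasure (μ i)]
    (hrange : ∀ i, ∀ᵐ x ∂μ i, x ∈ Set.Icc (0 : ℝ) 1) {ι : Type*} [DecidableEq ι]
    (a b : ι → Fin n)
    (hab : ∀ k l, k ≠ l → a k ≠ a l ∧ a k ≠ b l ∧ b k ≠ b l)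
    {θ : ℝ} (hθ : 0 ≤ θ) (t : Finset ι) :
    mgf (fun x => ∑ k ∈ t, halfSq (a k) (b k) x) (Measure.pi μ) (-θ) ≤
      Real.exp ((-θ + θ ^ 2 / 4) * ∑ k ∈ t, ∫ x, halfSq (a k) (b k) x ∂Measure.pi μ) := by
  induction t using Finset.induction_on with
  | empty => simp [mgf]
  | insert k t hk ih =>
    have hind : iIndepFun (fun (i : Fin n) (x : Fin n → ℝ) => x i) (Measure.pi μ) :=
      iIndepFun_pi (X := fun _ y => y) (fun i => aemeasurable_id)
    let S : Finset (Fin n) := {a k, b k}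
    let T : Finset (Fin n) := t.biUnion fun l => {a l, b l}
    have hST : Disjoint S T := by
      rw [Finset.disjoint_left]
      intro i hi hiT
      simp only [S, T, Finset.mem_biUnion, Finset.mem_insert, Finset.mem_singleton] at hi hiT
      obtain ⟨l, hl, hil⟩ := hiT
      have hkl : k ≠ l := fun h => hk (h ▸ hl)
      have h1 := hab k l hkl
      have h2 := hab l k hkl.symm
      grind
    -- extension by zero turns functions of all coordinates into functions of a block
    let ext : (U : Finset (Fin n)) → (U → ℝ) → Fin n → ℝ :=
      fun U z i => if h : i ∈ U then z ⟨i, h⟩ else 0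
    have hext : ∀ U, Measurable (ext U) := by
      intro U
      refine measurable_pi_lambda _ fun i => ?_
      by_cases h : i ∈ U
      · simp only [ext, h, dif_pos]
        fun_prop
      · simp only [ext, h, dif_neg, not_false_eq_true]
        fun_prop
    have hI := (hind.indepFun_finset S T hST (fun i => measurable_pi_apply i)).comp
      (φ := fun z => halfSq (a k) (b k) (ext S z))
      (ψ := fun z => ∑ l ∈ t, halfSq (a l) (b l) (ext T z))
      ((measurable_halfSq _ _).comp (hext S))
      (Finset.measurable_sum _ fun l _ => (measurable_halfSq _ _).comp (hext T))
    have e1 : (fun z => halfSq (a k) (b k) (ext S z)) ∘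
        (fun (x : Fin n → ℝ) (i : S) => x i) = halfSq (a k) (b k) := by
      ext x
      simp [halfSq, ext, S]
    have e2 : (fun z => ∑ l ∈ t, halfSq (a l) (b l) (ext T z)) ∘
        (fun (x : Fin n → ℝ) (i : T) => x i) =
        fun x => ∑ l ∈ t, halfSq (a l) (b l) x := by
      ext x
      refine Finset.sum_congr rfl fun l hl => ?_
      have ha : a l ∈ T := Finset.mem_biUnion.2 ⟨l, hl, by simp⟩
      have hb : b l ∈ T := Finset.mem_biUnion.2 ⟨l, hl, by simp⟩
      simp [halfSq, ext, ha, hb]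
    rw [e1, e2] at hI
    have hm := hI.mgf_add (t := -θ)
      (((measurable_halfSq _ _).const_mul _).exp.aestronglyMeasurable)
      (((Finset.measurable_sum t fun l _ =>
        measurable_halfSq (a l) (b l)).const_mul _).exp.aestronglyMeasurable)
    have e3 : (fun x => ∑ l ∈ insert k t, halfSq (a l) (b l) x) =
        halfSq (a k) (b k) + fun x => ∑ l ∈ t, halfSq (a l) (b l) x := by
      ext x
      simp [Finset.sum_insert hk]
    rw [e3, hm, Finset.sum_insert hk, mul_add, Real.exp_add]
    exact mul_le_mul
      (mgf_neg_le _ (measurable_halfSq _ _) (halfSq_mem μ hrange _ _) hθ) ih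
      mgf_nonneg (Real.exp_nonneg _)

/-- One-sided sub-Gaussian bounds survive summation without any independence: proxies add on the
scale of standard deviations, so the sum has proxy `(∑ √(c i))²`, which Cauchy–Schwarz bounds by the
number of variables times `∑ c i`. -/
lemma mgf_avg_le {Ω : Type*} [MeasurableSpace Ω] (P : Measure Ω)
    {ι : Type*} [Fintype ι] [Nonempty ι] (Y : ι → Ω → ℝ) (c : ι → ℝ) (hc : ∀ i, 0 ≤ c i)
    (hint : ∀ i t, Integrable (fun x => Real.exp (t * Y i x)) P)
    (hint' : ∀ t, Integrable (fun x => Real.exp (t * ∑ i, Y i x)) P)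
    (hY : ∀ i t, 0 ≤ t → mgf (Y i) P t ≤ Real.exp (t ^ 2 * c i)) {t : ℝ} (ht : 0 ≤ t) :
    mgf (fun x => ∑ i, Y i x) P t ≤
      Real.exp (t ^ 2 * (Fintype.card ι * ∑ i, c i)) := by
  set N : ℝ := (Fintype.card ι : ℝ) with hN
  have main : ∀ ε > 0, mgf (fun x => ∑ i, Y i x) P t ≤
      Real.exp (t ^ 2 * (N * (∑ i, c i + N * ε))) := by
    intro ε hε
    -- Jensen with weights proportional to the standard-deviation proxies `r i` equalises the
    -- exponents; `ε` keeps the weights positive.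
    let r : ι → ℝ := fun i => √(c i + ε)
    have hr : ∀ i, 0 < r i := fun i => Real.sqrt_pos.2 (by linarith [hc i])
    have hr2 : ∀ i, r i ^ 2 = c i + ε := fun i => Real.sq_sqrt (by linarith [hc i])
    let R := ∑ i, r i
    have hR : 0 < R := Finset.sum_pos (fun i _ => hr i) Finset.univ_nonempty
    have hw : ∑ i, r i / R = 1 := by
      rw [← Finset.sum_div]
      exact div_self hR.ne'
    calc mgf (fun x => ∑ i, Y i x) P t
        ≤ ∫ x, ∑ i, r i / R * Real.exp ((t * R / r i) * Y i x) ∂P := by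
          refine integral_mono (hint' t)
            (integrable_finsetSum _ fun i _ => (hint i _).const_mul _) fun x => ?_
          have hJ := convexOn_exp.map_sum_le (t := Finset.univ) (w := fun i => r i / R)
            (p := fun i => (t * R / r i) * Y i x)
            (fun i _ => (div_pos (hr i) hR).le) hw (fun i _ => Set.mem_univ _)
          simp only [smul_eq_mul] at hJ
          refine le_trans (le_of_eq ?_) hJ
          congr 1
          rw [Finset.mul_sum]
          refine Finset.sum_congr rfl fun i _ => ?_
          have := (hr i).ne'
          field_simp
      _ = ∑ i, r i / R * mgf (Y i) P (t * R / r i) := by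
          rw [integral_finsetSum _ fun i _ => (hint i _).const_mul _]
          simp only [integral_const_mul, mgf]
      _ ≤ ∑ i, r i / R * Real.exp (t ^ 2 * R ^ 2) := by
          refine Finset.sum_le_sum fun i _ => mul_le_mul_of_nonneg_left ?_ (div_pos (hr i) hR).le
          refine (hY i _ (div_nonneg (mul_nonneg ht hR.le) (hr i).le)).trans
            (Real.exp_le_exp.2 ?_)
          have h1 : c i / r i ^ 2 ≤ 1 := by
            rw [div_le_one (pow_pos (hr i) 2), hr2]
            linarith
          calc (t * R / r i) ^ 2 * c i = t ^ 2 * R ^ 2 * (c i / r i ^ 2) := by ring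
            _ ≤ t ^ 2 * R ^ 2 := mul_le_of_le_one_right (by positivity) h1
      _ = Real.exp (t ^ 2 * R ^ 2) := by rw [← Finset.sum_mul, hw, one_mul]
      _ ≤ _ := by
          refine Real.exp_le_exp.2 (mul_le_mul_of_nonneg_left ?_ (sq_nonneg t))
          refine (sq_sum_le_card_mul_sum_sq (s := Finset.univ) (f := r)).trans (le_of_eq ?_)
          simp only [hr2, Finset.sum_add_distrib, Finset.sum_const, nsmul_eq_mul,
            Finset.card_univ, hN]
  have hcont : Continuous fun ε : ℝ => Real.exp (t ^ 2 * (N * (∑ i, c i + N * ε))) := by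
    fun_prop
  have hlim := (hcont.tendsto 0).mono_left (nhdsWithin_le_nhds (s := Set.Ioi 0))
  simp only [mul_zero, add_zero] at hlim
  exact ge_of_tendsto hlim (eventually_nhdsWithin_of_forall fun ε hε => main ε hε)

/-- By double transitivity of the symmetric group, summing over all permutations the value of a
kernel at one fixed pair sees every ordered pair equally often. -/
lemma sum_perm_pair {n : ℕ} (f : Fin n → Fin n → ℝ) (hf : ∀ i, f i i = 0) (a b : Fin n)
    (hab : a ≠ b) :
    (n : ℝ) * (n - 1) * ∑ σ : Equiv.Perm (Fin n), f (σ a) (σ b) =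
      Fintype.card (Equiv.Perm (Fin n)) * ∑ i, ∑ j, f i j := by
  have hsame : ∀ c d : Fin n, c ≠ d →
      ∑ σ : Equiv.Perm (Fin n), f (σ c) (σ d) = ∑ σ : Equiv.Perm (Fin n), f (σ a) (σ b) := by
    intro c d hcd
    obtain ⟨τ, h1, h2⟩ := MulAction.is_two_pretransitive_iff.1
      (Equiv.Perm.isMultiplyPretransitive (Fin n) 2) hab hcd
    rw [← Equiv.sum_comp (Equiv.mulRight τ) fun σ => f (σ a) (σ b)]
    refine Finset.sum_congr rfl fun σ _ => ?_
    simp only [Equiv.Perm.smul_def] at h1 h2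
    simp [h1, h2]
  set F := ∑ σ : Equiv.Perm (Fin n), f (σ a) (σ b)
  have h1 : ∑ c, ∑ d, ∑ σ : Equiv.Perm (Fin n), f (σ c) (σ d) = (n : ℝ) * (n - 1) * F := by
    have : ∀ c : Fin n, ∑ d, ∑ σ : Equiv.Perm (Fin n), f (σ c) (σ d) = (n - 1) * F := by
      intro c
      have hd : ∀ d, ∑ σ : Equiv.Perm (Fin n), f (σ c) (σ d) =
          F - if d = c then F else 0 := by
        intro d
        split_ifs with h
        · simp [h, hf]
        · rw [hsame c d (Ne.symm h), sub_zero]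
      rw [Finset.sum_congr rfl fun d _ => hd d]
      simp [Finset.sum_sub_distrib, sub_mul]
    simp [this, mul_assoc]
  rw [← h1]
  have h2 : ∀ σ : Equiv.Perm (Fin n), ∑ c, ∑ d, f (σ c) (σ d) = ∑ i, ∑ j, f i j := by
    intro σ
    rw [← Equiv.sum_comp σ fun i => ∑ j, f i j]
    exact Finset.sum_congr rfl fun c _ => Equiv.sum_comp σ (f (σ c))
  calc ∑ c, ∑ d, ∑ σ : Equiv.Perm (Fin n), f (σ c) (σ d)
      = ∑ σ : Equiv.Perm (Fin n), ∑ c, ∑ d, f (σ c) (σ d) := by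
        rw [Finset.sum_comm (s := (Finset.univ : Finset (Equiv.Perm (Fin n))))]
        exact Finset.sum_congr rfl fun c _ => Finset.sum_comm
    _ = _ := by simp [h2]

/-- Left endpoint `2k` of the `k`-th pair of the reference matching of `Fin n`. -/
def pairFst (n : ℕ) (k : Fin (n / 2)) : Fin n := ⟨2 * k, by omega⟩

/-- Right endpoint `2k + 1` of the `k`-th pair of the reference matching of `Fin n`. -/
def pairSnd (n : ℕ) (k : Fin (n / 2)) : Fin n := ⟨2 * k + 1, by omega⟩

/-- Sum of the kernel over the reference matching transported by the permutation `σ`. -/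
noncomputable def matchSum {n : ℕ} (σ : Equiv.Perm (Fin n)) (x : Fin n → ℝ) : ℝ :=
  ∑ k, halfSq (σ (pairFst n k)) (σ (pairSnd n k)) x

/-- Hoeffding's representation: the sample variance is the average of `matchSum σ / ⌊n/2⌋`. -/
lemma sum_matchSum {n : ℕ} (hn : 2 ≤ n) (x : Fin n → ℝ) :
    ∑ σ : Equiv.Perm (Fin n), matchSum σ x =
      Fintype.card (Equiv.Perm (Fin n)) * ((n / 2 : ℕ) : ℝ) * sampleVar n x := by
  have hn' : (2 : ℝ) ≤ n := by exact_mod_cast hn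
  have hk : ∀ k : Fin (n / 2), ∑ σ : Equiv.Perm (Fin n),
      halfSq (σ (pairFst n k)) (σ (pairSnd n k)) x =
      Fintype.card (Equiv.Perm (Fin n)) * sampleVar n x := by
    intro k
    have h := sum_perm_pair (fun i j => halfSq i j x) (by simp [halfSq])
      (pairFst n k) (pairSnd n k) (by simp [pairFst, pairSnd])
    have hs : ∑ i, ∑ j, halfSq i j x = (n : ℝ) * (n - 1) * sampleVar n x := by
      have h1 : (n : ℝ) ≠ 0 := by linarith
      have h2 : (n : ℝ) - 1 ≠ 0 := by linarith
      simp only [halfSq, sampleVar, ← Finset.sum_div]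
      field_simp
    rw [hs] at h
    have h0 : (n : ℝ) * (n - 1) ≠ 0 := mul_ne_zero (by linarith) (by linarith)
    refine mul_left_cancel₀ h0 (h.trans ?_)
    ring
  simp only [matchSum]
  rw [Finset.sum_comm, Finset.sum_congr rfl fun k _ => hk k]
  simp only [Finset.sum_const, Finset.card_univ, Fintype.card_fin, nsmul_eq_mul]
  ring

/-- **Inequality (10)**: lower tail for the sample variance. For independent `[0,1]`-valued
`X₁, …, Xₙ`, `n ≥ 2`, `s > 0`:
`Pr{ 𝔼Vₙ - Vₙ(𝐗) > s } ≤ exp(-(n-1)s² / (2𝔼Vₙ))`. -/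
theorem sample_variance_lower_tail (n : ℕ) (hn : 2 ≤ n)
    (μ : Fin n → Measure ℝ) [∀ i, IsProbabilityMeasure (μ i)]
    (hrange : ∀ i, ∀ᵐ x ∂μ i, x ∈ Set.Icc (0 : ℝ) 1) (s : ℝ) (hs : 0 < s) :
    ((Measure.pi μ)
      {X | (∫ z, sampleVar n z ∂Measure.pi μ) - sampleVar n X > s}).toReal ≤
      Real.exp (-((n : ℝ) - 1) * s ^ 2 /
        (2 * ∫ z, sampleVar n z ∂Measure.pi μ)) := by
  set P := Measure.pi μ with hP
  set E := ∫ z, sampleVar n z ∂P with hE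
  have hn' : (2 : ℝ) ≤ n := by exact_mod_cast hn
  set m : ℝ := ((n / 2 : ℕ) : ℝ) with hm
  have hm1 : (n : ℝ) - 1 ≤ 2 * m := by
    have : n ≤ 2 * (n / 2) + 1 := by omega
    have : (n : ℝ) ≤ 2 * ((n / 2 : ℕ) : ℝ) + 1 := by exact_mod_cast this
    linarith
  have hm0 : 0 < m := by linarith
  set N : ℝ := (Fintype.card (Equiv.Perm (Fin n)) : ℝ) with hN
  have hN0 : 0 < N := by
    rw [hN]
    exact_mod_cast Fintype.card_pos
  have hE0 : 0 ≤ E := integral_nonneg fun x => div_nonneg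
    (Finset.sum_nonneg fun i _ => Finset.sum_nonneg fun j _ => sq_nonneg _)
    (mul_nonneg (by linarith) (by linarith))
  rcases hE0.eq_or_lt with hE0 | hEpos
  · -- the right-hand side is `exp 0` by the convention `x / 0 = 0`
    rw [← hE0]
    simpa using (prob_le_one : P _ ≤ 1) |> ENNReal.toReal_mono ENNReal.one_ne_top
  have hMmeas : ∀ σ : Equiv.Perm (Fin n), Measurable (matchSum σ) := fun σ =>
    Finset.measurable_sum _ fun k _ => measurable_halfSq _ _
  have hMb : ∀ σ : Equiv.Perm (Fin n), ∀ᵐ x ∂P, matchSum σ x ∈ Set.Icc (0 : ℝ) m := by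
    intro σ
    have : ∀ᵐ x ∂P, ∀ k, halfSq (σ (pairFst n k)) (σ (pairSnd n k)) x ∈
        Set.Icc (0 : ℝ) (1 / 2) := ae_all_iff.2 fun k => halfSq_mem μ hrange _ _
    filter_upwards [this] with x hx
    refine ⟨Finset.sum_nonneg fun k _ => (hx k).1, ?_⟩
    calc matchSum σ x ≤ ∑ k : Fin (n / 2), (1 : ℝ) :=
          Finset.sum_le_sum fun k _ => (hx k).2.trans (by norm_num)
      _ = m := by simp [hm]
  have hMint : ∀ σ : Equiv.Perm (Fin n), Integrable (matchSum σ) P := fun σ =>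
    Integrable.of_mem_Icc 0 m (hMmeas σ).aemeasurable (hMb σ)
  let v : Equiv.Perm (Fin n) → ℝ := fun σ => ∫ x, matchSum σ x ∂P
  let Y : Equiv.Perm (Fin n) → (Fin n → ℝ) → ℝ := fun σ x => v σ - matchSum σ x
  have hYmeas : ∀ σ, Measurable (Y σ) := fun σ => (hMmeas σ).const_sub _
  have hYb : ∀ σ, ∀ᵐ x ∂P, Y σ x ∈ Set.Icc (v σ - m) (v σ) := by
    intro σ
    filter_upwards [hMb σ] with x hx
    exact ⟨by linarith [hx.2], by linarith [hx.1]⟩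
  have hv0 : ∀ σ, 0 ≤ v σ := fun σ =>
    integral_nonneg_of_ae ((hMb σ).mono fun x hx => hx.1)
  have hvsum : ∑ σ, v σ = N * m * E := by
    rw [hE, ← integral_const_mul, ← integral_finsetSum _ fun σ _ => hMint σ]
    exact integral_congr_ae (Filter.Eventually.of_forall fun x => sum_matchSum hn x)
  have hYsum : ∀ x, ∑ σ, Y σ x = N * m * (E - sampleVar n x) := by
    intro x
    simp only [Y, Finset.sum_sub_distrib, hvsum, sum_matchSum hn x]
    ring
  have hSmeas : Measurable fun x => ∑ σ, Y σ x :=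
    Finset.measurable_sum _ fun σ _ => hYmeas σ
  have hSint : ∀ t, Integrable (fun x => Real.exp (t * ∑ σ, Y σ x)) P := by
    intro t
    refine integrable_exp_mul_of_mem_Icc (a := ∑ σ, (v σ - m)) (b := ∑ σ, v σ)
      hSmeas.aemeasurable ?_
    filter_upwards [ae_all_iff.2 hYb] with x hx
    exact ⟨Finset.sum_le_sum fun σ _ => (hx σ).1, Finset.sum_le_sum fun σ _ => (hx σ).2⟩
  have hYmgf : ∀ σ t, 0 ≤ t → mgf (Y σ) P t ≤ Real.exp (t ^ 2 * (v σ / 4)) := by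
    intro σ t ht
    have h := mgf_matching_le μ hrange (fun k => σ (pairFst n k)) (fun k => σ (pairSnd n k))
      (by
        intro k l hkl
        have : (k : ℕ) ≠ l := fun h => hkl (Fin.ext h)
        simp only [ne_eq, EmbeddingLike.apply_eq_iff_eq, pairFst, pairSnd, Fin.mk.injEq]
        omega) ht Finset.univ
    rw [← integral_finsetSum _ fun k _ => Integrable.of_mem_Icc 0 (1 / 2)
      (measurable_halfSq _ _).aemeasurable (halfSq_mem μ hrange _ _)] at h
    change mgf (matchSum σ) P (-t) ≤ Real.exp ((-t + t ^ 2 / 4) * v σ) at h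
    have e : mgf (Y σ) P t = Real.exp (t * v σ) * mgf (matchSum σ) P (-t) := by
      simp only [mgf]
      rw [← integral_const_mul]
      refine integral_congr_ae (Filter.Eventually.of_forall fun x => ?_)
      simp only [Y, ← Real.exp_add]
      congr 1
      ring
    rw [e]
    refine (mul_le_mul_of_nonneg_left h (Real.exp_nonneg _)).trans (le_of_eq ?_)
    rw [← Real.exp_add]
    congr 1
    ring
  -- Chernoff parameter for `∑ σ, Y σ = N m (E - V)`, optimal for the proxy `E / (n - 1)`
  set t : ℝ := s * (n - 1) / (E * (N * m)) with ht
  have ht0 : 0 ≤ t := div_nonneg (mul_nonneg hs.le (by linarith)) (by positivity)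
  have hmgf := mgf_avg_le P Y (fun σ => v σ / 4) (fun σ => by linarith [hv0 σ])
    (fun σ t => integrable_exp_mul_of_mem_Icc (hYmeas σ).aemeasurable (hYb σ)) hSint hYmgf ht0
  have hch := measure_ge_le_exp_mul_mgf (N * m * s) ht0 (hSint t)
  have hsub : (P {X | E - sampleVar n X > s}).toReal ≤
      P.real {x | N * m * s ≤ ∑ σ, Y σ x} := by
    refine measureReal_mono fun x hx => ?_
    simp only [Set.mem_ofPred_eq, hYsum] at hx ⊢
    exact mul_le_mul_of_nonneg_left hx.le (by positivity)
  refine hsub.trans (hch.trans ((mul_le_mul_of_nonneg_left hmgf (Real.exp_nonneg _)).trans ?_))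
  rw [← Real.exp_add, Real.exp_le_exp, ← Finset.sum_div, hvsum, ← hN]
  have e1 : -t * (N * m * s) + t ^ 2 * (N * (N * m * E / 4)) =
      -(s ^ 2 * (n - 1) / E) + (s ^ 2 * (n - 1) / E) * ((n - 1) / (4 * m)) := by
    rw [ht]
    field_simp
  have e2 : -((n : ℝ) - 1) * s ^ 2 / (2 * E) =
      -(s ^ 2 * (n - 1) / E) + (s ^ 2 * (n - 1) / E) * (1 / 2) := by
    field_simp
    ring
  rw [e1, e2]
  have h3 : ((n : ℝ) - 1) / (4 * m) ≤ 1 / 2 := by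
    rw [div_le_iff₀ (by positivity)]
    linarith
  have h4 : 0 ≤ s ^ 2 * ((n : ℝ) - 1) / E :=
    div_nonneg (mul_nonneg (sq_nonneg s) (by linarith)) hE0
  linarith [mul_le_mul_of_nonneg_left h3 h4]
end

section
/- Let n ≥ 2 and let X = (X_1, ..., X_n) be a vector of independent random variables with values in [0,1]. Then for every s > 0, Pr{ V_n(X) − E[V_n(X)] > s } ≤ exp( −(n−1) s² / (2 E[V_n(X)] + s) ). -/
/-!
The sample variance is an average of squared differences over the edges of the complete graph on
`Fin n`, and that graph splits into `n` matchings: edge `{i, j}` belongs to the matching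
`c = i + j` (addition modulo `n`). Along one matching the squared differences are independent and
`[0,1]`-valued, so convexity of the exponential bounds the moment generating function of their
sum `D` at `u` by `exp ((e ^ u - 1) * 𝔼 D)` (`mgf_matching_le`). Hölder's inequality with `n` equal
exponents combines the `n` matchings (`mgf_sampleVar_le`):
`𝔼 exp ((n - 1) u Vₙ) ≤ exp ((n - 1) (e ^ u - 1) 𝔼 Vₙ)`.
Since Hölder averages the logarithms of the moment generating functions, this is linear in the
expectations and no identical distribution is required.

The result follows from Markov's inequality with `u = 2 s / (2 𝔼 Vₙ + s)`, using
`e ^ u ≤ (2 + u) / (2 - u)` (`exp_mul_two_sub_le`). If `𝔼 Vₙ = 0`, then `u = 1` is used instead.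
-/


open MeasureTheory

open ProbabilityTheory

/-- The squared difference of the coordinates `i` and `j`. -/
def sqDiff {n : ℕ} (i j : Fin n) (x : Fin n → ℝ) : ℝ := (x i - x j) ^ 2

/-- The edges `{i, c - i}` of the matching with label `c`, each represented by its smaller
endpoint. The subtraction is modulo `n`. -/
def matching {n : ℕ} [NeZero n] (c : Fin n) : Finset (Fin n) :=
  Finset.univ.filter fun i => i < c - i

lemma sum_matching {n : ℕ} [NeZero n] (f : Fin n → Fin n → ℝ) (hsymm : ∀ i j, f i j = f j i)
    (hdiag : ∀ i, f i i = 0) :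
    2 * ∑ c, ∑ i ∈ matching c, f i (c - i) = ∑ i, ∑ j, f i j := by
  have h1 : ∀ c : Fin n, 2 * ∑ i ∈ matching c, f i (c - i) = ∑ i, f i (c - i) := by
    intro c
    -- The involution `i ↦ c - i` exchanges the smaller and the larger endpoints.
    have h2 : ∑ i, (if c - i < i then f i (c - i) else 0)
        = ∑ i, (if i < c - i then f i (c - i) else 0) := by
      refine Fintype.sum_equiv (Equiv.subLeft c) _ _ fun i => ?_
      simp only [Equiv.subLeft_apply, sub_sub_cancel]
      rw [hsymm]
    rw [matching, Finset.sum_filter, two_mul]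
    nth_rewrite 2 [← h2]
    rw [← Finset.sum_add_distrib]
    refine Finset.sum_congr rfl fun i _ => ?_
    rcases lt_trichotomy i (c - i) with h | h | h
    · simp [h, h.le.not_gt]
    · rw [← h]; simp [hdiag]
    · simp [h, h.le.not_gt]
  rw [Finset.mul_sum, Finset.sum_congr rfl fun c _ => h1 c, Finset.sum_comm]
  refine Finset.sum_congr rfl fun i _ => ?_
  exact Fintype.sum_equiv (Equiv.subRight i) _ _ fun c => rfl

lemma measurable_sqDiff {n : ℕ} (i j : Fin n) : Measurable (sqDiff i j) := by
  unfold sqDiff; fun_prop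

lemma ae_sqDiff_mem {n : ℕ} (μ : Fin n → Measure ℝ) [∀ i, IsProbabilityMeasure (μ i)]
    (hrange : ∀ i, ∀ᵐ x ∂μ i, x ∈ Set.Icc (0 : ℝ) 1) (i j : Fin n) :
    ∀ᵐ x ∂Measure.pi μ, sqDiff i j x ∈ Set.Icc (0 : ℝ) 1 := by
  have h : ∀ i, ∀ᵐ x ∂Measure.pi μ, x i ∈ Set.Icc (0 : ℝ) 1 := fun i =>
    (Measure.quasiMeasurePreserving_eval μ i).ae (hrange i)
  filter_upwards [h i, h j] with x hi hj
  obtain ⟨hi0, hi1⟩ := hi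
  obtain ⟨hj0, hj1⟩ := hj
  refine ⟨sq_nonneg _, ?_⟩
  unfold sqDiff
  nlinarith

lemma integrable_sqDiff {n : ℕ} (μ : Fin n → Measure ℝ) [∀ i, IsProbabilityMeasure (μ i)]
    (hrange : ∀ i, ∀ᵐ x ∂μ i, x ∈ Set.Icc (0 : ℝ) 1) (i j : Fin n) :
    Integrable (sqDiff i j) (Measure.pi μ) :=
  Integrable.of_mem_Icc 0 1 (measurable_sqDiff i j).aemeasurable (ae_sqDiff_mem μ hrange i j)

lemma exp_mul_le_of_mem_Icc {d : ℝ} (hd : d ∈ Set.Icc (0 : ℝ) 1) (u : ℝ) :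
    Real.exp (u * d) ≤ 1 + d * (Real.exp u - 1) := by
  have h := convexOn_exp.2 (Set.mem_univ 0) (Set.mem_univ u) (sub_nonneg.2 hd.2) hd.1
    (by ring : (1 - d) + d = 1)
  simp only [smul_eq_mul, mul_zero, zero_add, Real.exp_zero, mul_one] at h
  rw [mul_comm u d]
  linarith

/-- Linear combinations of squared differences are almost surely bounded, hence have exponential
moments. -/
lemma integrable_exp_sum {n : ℕ} (μ : Fin n → Measure ℝ) [∀ i, IsProbabilityMeasure (μ i)]
    (hrange : ∀ i, ∀ᵐ x ∂μ i, x ∈ Set.Icc (0 : ℝ) 1) {ι : Type*} (T : Finset ι)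
    (a b : ι → Fin n) (u : ℝ) (hu : 0 ≤ u) :
    Integrable (fun x => Real.exp (u * ∑ k ∈ T, sqDiff (a k) (b k) x)) (Measure.pi μ) := by
  have hm : Measurable (fun x => Real.exp (u * ∑ k ∈ T, sqDiff (a k) (b k) x)) := by
    unfold sqDiff; fun_prop
  refine Integrable.of_mem_Icc 0 (Real.exp (u * ∑ k ∈ T, 1)) hm.aemeasurable ?_
  have h : ∀ᵐ x ∂Measure.pi μ, ∀ k ∈ T, sqDiff (a k) (b k) x ∈ Set.Icc (0 : ℝ) 1 :=
    (Finset.eventually_all T).2 fun k _ => ae_sqDiff_mem μ hrange _ _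
  filter_upwards [h] with x hx
  refine ⟨(Real.exp_pos _).le, Real.exp_le_exp.2 (mul_le_mul_of_nonneg_left ?_ hu)⟩
  exact Finset.sum_le_sum fun k hk => (hx k hk).2

lemma mgf_sqDiff_le {n : ℕ} (μ : Fin n → Measure ℝ) [∀ i, IsProbabilityMeasure (μ i)]
    (hrange : ∀ i, ∀ᵐ x ∂μ i, x ∈ Set.Icc (0 : ℝ) 1) (i j : Fin n) (u : ℝ) (hu : 0 ≤ u) :
    mgf (sqDiff i j) (Measure.pi μ) u ≤
      Real.exp ((Real.exp u - 1) * ∫ x, sqDiff i j x ∂Measure.pi μ) := by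
  have hd := integrable_sqDiff μ hrange i j
  have h1 : mgf (sqDiff i j) (Measure.pi μ) u ≤
      ∫ x, (1 + sqDiff i j x * (Real.exp u - 1)) ∂Measure.pi μ := by
    refine integral_mono_ae ?_ ((integrable_const _).add (hd.mul_const _)) ?_
    · simpa using integrable_exp_sum μ hrange {()} (fun _ => i) (fun _ => j) u hu
    · filter_upwards [ae_sqDiff_mem μ hrange i j] with x hx
      exact exp_mul_le_of_mem_Icc hx u
  rw [integral_add (integrable_const _) (hd.mul_const _), integral_mul_const] at h1
  simp only [integral_const, probReal_univ, smul_eq_mul, one_mul] at h1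
  refine h1.trans ?_
  rw [add_comm, mul_comm]
  exact Real.add_one_le_exp _

/-- Squared differences over pairwise disjoint edges `{i, τ i}` are independent, so the bound for
one edge multiplies. -/
lemma mgf_sum_disjoint_le {n : ℕ} (μ : Fin n → Measure ℝ) [∀ i, IsProbabilityMeasure (μ i)]
    (hrange : ∀ i, ∀ᵐ x ∂μ i, x ∈ Set.Icc (0 : ℝ) 1) (τ : Fin n → Fin n) (u : ℝ) (hu : 0 ≤ u)
    (T : Finset (Fin n))
    (hT : ∀ i ∈ T, ∀ j ∈ T, i ≠ j → Disjoint ({i, τ i} : Finset (Fin n)) {j, τ j}) :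
    mgf (fun x => ∑ i ∈ T, sqDiff i (τ i) x) (Measure.pi μ) u ≤
      Real.exp ((Real.exp u - 1) * ∑ i ∈ T, ∫ x, sqDiff i (τ i) x ∂Measure.pi μ) := by
  have hind : iIndepFun (fun (i : Fin n) (x : Fin n → ℝ) => x i) (Measure.pi μ) :=
    iIndepFun_pi (X := fun _ => id) fun _ => aemeasurable_id
  induction T using Finset.induction_on with
  | empty => simp [mgf]
  | insert a T ha ih =>
    have ih' := ih fun i hi j hj => hT i (Finset.mem_insert_of_mem hi) j
      (Finset.mem_insert_of_mem hj)
    have hdisj : Disjoint ({a, τ a} : Finset (Fin n)) (T.biUnion fun i => {i, τ i}) := by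
      rw [Finset.disjoint_biUnion_right]
      intro i hi
      exact hT a (Finset.mem_insert_self _ _) i (Finset.mem_insert_of_mem hi)
        fun h => ha (h ▸ hi)
    have hI := hind.indepFun_finset _ _ hdisj fun i => measurable_pi_apply i
    have hmem_a : a ∈ ({a, τ a} : Finset (Fin n)) ∧ τ a ∈ ({a, τ a} : Finset (Fin n)) := by simp
    have hmem : ∀ i : T, (i : Fin n) ∈ T.biUnion (fun i => ({i, τ i} : Finset (Fin n))) ∧
        τ i ∈ T.biUnion (fun i => ({i, τ i} : Finset (Fin n))) := fun i =>
      ⟨Finset.mem_biUnion.2 ⟨i, i.2, by simp⟩, Finset.mem_biUnion.2 ⟨i, i.2, by simp⟩⟩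
    have hI2 : IndepFun (sqDiff a (τ a)) (fun x => ∑ i ∈ T, sqDiff i (τ i) x) (Measure.pi μ) := by
      have h := hI.comp
        (φ := fun y => (y ⟨a, hmem_a.1⟩ - y ⟨τ a, hmem_a.2⟩) ^ 2)
        (ψ := fun y => ∑ i : T, (y ⟨i, (hmem i).1⟩ - y ⟨τ i, (hmem i).2⟩) ^ 2)
        (by fun_prop) (by fun_prop)
      have e : (fun x => ∑ i ∈ T, sqDiff i (τ i) x) = fun x => ∑ i : T, sqDiff i (τ i) x :=
        funext fun x => (Finset.sum_coe_sort T fun i => sqDiff i (τ i) x).symm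
      rw [e]
      exact h
    have hsum : (fun x => ∑ i ∈ insert a T, sqDiff i (τ i) x)
        = sqDiff a (τ a) + fun x => ∑ i ∈ T, sqDiff i (τ i) x := by
      ext x
      simp [Finset.sum_insert ha]
    have hm : Measurable (fun x => ∑ i ∈ T, sqDiff i (τ i) x) := by
      unfold sqDiff; fun_prop
    rw [hsum, hI2.mgf_add' (measurable_sqDiff _ _).aestronglyMeasurable hm.aestronglyMeasurable,
      Finset.sum_insert ha, mul_add, Real.exp_add]
    exact mul_le_mul (mgf_sqDiff_le μ hrange _ _ u hu) ih' mgf_nonneg (Real.exp_pos _).le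

lemma mgf_matching_le_s10 {n : ℕ} [NeZero n] (μ : Fin n → Measure ℝ)
    [∀ i, IsProbabilityMeasure (μ i)]
    (hrange : ∀ i, ∀ᵐ x ∂μ i, x ∈ Set.Icc (0 : ℝ) 1) (c : Fin n) (u : ℝ) (hu : 0 ≤ u) :
    mgf (fun x => ∑ i ∈ matching c, sqDiff i (c - i) x) (Measure.pi μ) u ≤
      Real.exp ((Real.exp u - 1) *
        ∑ i ∈ matching c, ∫ x, sqDiff i (c - i) x ∂Measure.pi μ) := by
  refine mgf_sum_disjoint_le μ hrange (fun i => c - i) u hu _ fun i hi j hj hij => ?_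
  simp only [matching, Finset.mem_filter, Finset.mem_univ, true_and] at hi hj
  have h1 : i ≠ c - j := by
    rintro rfl
    rw [sub_sub_cancel] at hi
    exact hi.not_gt hj
  have h2 : c - i ≠ j := by
    rintro rfl
    rw [sub_sub_cancel] at hj
    exact hi.not_gt hj
  have h3 : c - i ≠ c - j := fun h => hij (sub_right_injective h)
  simp [hij.symm, h1.symm, h2.symm, h3.symm]

lemma sampleVar_eq {n : ℕ} [NeZero n] (hn : 2 ≤ n) (x : Fin n → ℝ) :
    ((n : ℝ) - 1) * sampleVar n x =
      (n : ℝ)⁻¹ * ∑ c, ∑ i ∈ matching c, sqDiff i (c - i) x := by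
  have h := sum_matching (fun i j => sqDiff i j x) (fun i j => by unfold sqDiff; ring)
    (fun i => by simp [sqDiff])
  have hn' : (2 : ℝ) ≤ n := by exact_mod_cast hn
  have h1 : (n : ℝ) - 1 ≠ 0 := by linarith
  have h0 : (n : ℝ) ≠ 0 := by linarith
  have h2 : sampleVar n x = (2 * ∑ c, ∑ i ∈ matching c, sqDiff i (c - i) x) /
      (2 * (n : ℝ) * ((n : ℝ) - 1)) := by rw [h]; rfl
  rw [h2]
  field_simp

lemma integral_sampleVar_eq {n : ℕ} [NeZero n] (hn : 2 ≤ n) (μ : Fin n → Measure ℝ)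
    [∀ i, IsProbabilityMeasure (μ i)] (hrange : ∀ i, ∀ᵐ x ∂μ i, x ∈ Set.Icc (0 : ℝ) 1) :
    ((n : ℝ) - 1) * ∫ x, sampleVar n x ∂Measure.pi μ =
      (n : ℝ)⁻¹ * ∑ c, ∑ i ∈ matching c, ∫ x, sqDiff i (c - i) x ∂Measure.pi μ := by
  rw [← integral_const_mul]
  simp_rw [sampleVar_eq hn]
  rw [integral_const_mul, integral_finsetSum _ fun c _ =>
    integrable_finsetSum _ fun i _ => integrable_sqDiff μ hrange _ _]
  congr 1
  exact Finset.sum_congr rfl fun c _ =>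
    integral_finsetSum _ fun i _ => integrable_sqDiff μ hrange _ _

lemma integrable_exp_sampleVar {n : ℕ} [NeZero n] (hn : 2 ≤ n) (μ : Fin n → Measure ℝ)
    [∀ i, IsProbabilityMeasure (μ i)] (hrange : ∀ i, ∀ᵐ x ∂μ i, x ∈ Set.Icc (0 : ℝ) 1)
    (u : ℝ) (hu : 0 ≤ u) :
    Integrable (fun x => Real.exp (((n : ℝ) - 1) * u * sampleVar n x)) (Measure.pi μ) := by
  have h := integrable_exp_sum μ hrange (Finset.univ.sigma fun c : Fin n => matching c)
    (fun k => k.2) (fun k => k.1 - k.2) (u * (n : ℝ)⁻¹) (by positivity)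
  simp_rw [Finset.sum_sigma] at h
  convert h using 3 with x
  rw [mul_assoc u, ← sampleVar_eq hn]
  ring

lemma mgf_sampleVar_le {n : ℕ} [NeZero n] (hn : 2 ≤ n) (μ : Fin n → Measure ℝ)
    [∀ i, IsProbabilityMeasure (μ i)] (hrange : ∀ i, ∀ᵐ x ∂μ i, x ∈ Set.Icc (0 : ℝ) 1)
    (u : ℝ) (hu : 0 ≤ u) :
    mgf (sampleVar n) (Measure.pi μ) (((n : ℝ) - 1) * u) ≤
      Real.exp (((n : ℝ) - 1) * (Real.exp u - 1) * ∫ x, sampleVar n x ∂Measure.pi μ) := by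
  have h0 : (n : ℝ) ≠ 0 := by exact_mod_cast NeZero.ne n
  have hD : ∀ c : Fin n, Measurable fun x => ∑ i ∈ matching c, sqDiff i (c - i) x := fun c => by
    unfold sqDiff; fun_prop
  have hH := ENNReal.lintegral_prod_norm_pow_le (μ := Measure.pi μ) (Finset.univ : Finset (Fin n))
    (f := fun c x => ENNReal.ofReal (Real.exp (u * ∑ i ∈ matching c, sqDiff i (c - i) x)))
    (p := fun _ => (n : ℝ)⁻¹)
    (fun c _ => ((hD c).const_mul u).exp.ennreal_ofReal.aemeasurable)
    (by simp [h0]) (fun _ _ => by positivity)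
  have hL : ∀ x, ∏ c, ENNReal.ofReal (Real.exp (u * ∑ i ∈ matching c, sqDiff i (c - i) x)) ^
      (n : ℝ)⁻¹ = ENNReal.ofReal (Real.exp (((n : ℝ) - 1) * u * sampleVar n x)) := by
    intro x
    rw [mul_right_comm, sampleVar_eq hn, Finset.prod_congr rfl fun c _ =>
      ENNReal.ofReal_rpow_of_pos (Real.exp_pos _),
      ← ENNReal.ofReal_prod_of_nonneg fun c _ => by positivity]
    simp_rw [← Real.exp_mul]
    rw [← Real.exp_sum, ← Finset.sum_mul, ← Finset.mul_sum]
    congr 2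
    ring
  have hR : ∀ c : Fin n, (∫⁻ x, ENNReal.ofReal
      (Real.exp (u * ∑ i ∈ matching c, sqDiff i (c - i) x)) ∂Measure.pi μ) ^ (n : ℝ)⁻¹ ≤
      ENNReal.ofReal (Real.exp ((n : ℝ)⁻¹ * ((Real.exp u - 1) *
        ∑ i ∈ matching c, ∫ x, sqDiff i (c - i) x ∂Measure.pi μ))) := by
    intro c
    rw [← ofReal_integral_eq_lintegral_ofReal
      (integrable_exp_sum μ hrange (matching c) (fun i => i) (fun i => c - i) u hu)
      (Filter.Eventually.of_forall fun x => (Real.exp_pos _).le),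
      ENNReal.ofReal_rpow_of_nonneg (integral_nonneg fun x => (Real.exp_pos _).le)
        (by positivity), mul_comm (n : ℝ)⁻¹, Real.exp_mul]
    refine ENNReal.ofReal_le_ofReal (Real.rpow_le_rpow
      (integral_nonneg fun x => (Real.exp_pos _).le) ?_ (by positivity))
    exact mgf_matching_le_s10 μ hrange c u hu
  simp_rw [hL] at hH
  have hH2 := hH.trans (Finset.prod_le_prod' fun c _ => hR c)
  rw [← ofReal_integral_eq_lintegral_ofReal (integrable_exp_sampleVar hn μ hrange u hu)
      (Filter.Eventually.of_forall fun x => (Real.exp_pos _).le),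
    ← ENNReal.ofReal_prod_of_nonneg (fun c _ => (Real.exp_pos _).le), ← Real.exp_sum,
    ENNReal.ofReal_le_ofReal_iff (Real.exp_pos _).le, ← Finset.mul_sum, ← Finset.mul_sum] at hH2
  refine hH2.trans (le_of_eq ?_)
  rw [mul_right_comm, integral_sampleVar_eq hn μ hrange]
  congr 1
  ring

/-- The `(1,1)` Padé bound for the exponential, obtained from the leading term of the series of
`log (1 + u / 2) - log (1 - u / 2)`. -/
lemma exp_mul_two_sub_le {u : ℝ} (h0 : 0 ≤ u) (h2 : u < 2) :
    Real.exp u * (2 - u) ≤ 2 + u := by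
  have hs := Real.hasSum_log_sub_log_of_abs_lt_one (x := u / 2)
    (by rw [abs_of_nonneg (by linarith)]; linarith)
  have h := hs.summable.sum_le_tsum {0} fun k _ => by positivity
  rw [hs.tsum_eq] at h
  simp only [Finset.sum_singleton, Nat.cast_zero, mul_zero, zero_add, pow_one] at h
  rw [← Real.log_div (by linarith) (by linarith)] at h
  have h3 : u ≤ Real.log ((1 + u / 2) / (1 - u / 2)) := by linarith
  rw [Real.le_log_iff_exp_le (by apply div_pos <;> linarith), le_div_iff₀ (by linarith)] at h3
  linarith

/-- Optimisation of the exponent in Markov's inequality. -/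
lemma exists_exponent {E s : ℝ} (hE : 0 ≤ E) (hs : 0 < s) :
    ∃ u, 0 ≤ u ∧ (Real.exp u - 1) * E - u * (E + s) ≤ -(s ^ 2 / (2 * E + s)) := by
  rcases hE.eq_or_lt with rfl | hE
  · refine ⟨1, zero_le_one, le_of_eq ?_⟩
    field_simp
    ring
  · have hp : 0 < 2 * E + s := by linarith
    refine ⟨2 * s / (2 * E + s), by positivity, ?_⟩
    have hlt : 2 * s / (2 * E + s) < 2 := by rw [div_lt_iff₀ hp]; linarith
    have h := exp_mul_two_sub_le (by positivity) hlt
    have e1 : 2 - 2 * s / (2 * E + s) = 4 * E / (2 * E + s) := by field_simp; ring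
    have e2 : 2 + 2 * s / (2 * E + s) = 4 * (E + s) / (2 * E + s) := by field_simp; ring
    rw [e1, e2, mul_div_assoc', div_le_div_iff_of_pos_right hp] at h
    have h4 : (Real.exp (2 * s / (2 * E + s)) - 1) * E ≤ s := by linarith
    have h5 : s - 2 * s / (2 * E + s) * (E + s) = -(s ^ 2 / (2 * E + s)) := by
      field_simp; ring
    linarith

/-- **Inequality (11)**: upper tail for the sample variance. For independent `[0,1]`-valued
`X₁, …, Xₙ`, `n ≥ 2`, `s > 0`:
`Pr{ Vₙ(𝐗) - 𝔼Vₙ > s } ≤ exp(-(n-1)s² / (2𝔼Vₙ + s))`. -/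
theorem sample_variance_upper_tail (n : ℕ) (hn : 2 ≤ n)
    (μ : Fin n → Measure ℝ) [∀ i, IsProbabilityMeasure (μ i)]
    (hrange : ∀ i, ∀ᵐ x ∂μ i, x ∈ Set.Icc (0 : ℝ) 1) (s : ℝ) (hs : 0 < s) :
    ((Measure.pi μ)
      {X | sampleVar n X - (∫ z, sampleVar n z ∂Measure.pi μ) > s}).toReal ≤
      Real.exp (-((n : ℝ) - 1) * s ^ 2 /
        (2 * (∫ z, sampleVar n z ∂Measure.pi μ) + s)) := by
  have : NeZero n := ⟨by omega⟩
  have hn' : (2 : ℝ) ≤ n := by exact_mod_cast hn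
  have hn1 : (0 : ℝ) ≤ (n : ℝ) - 1 := by linarith
  have hmgf := mgf_sampleVar_le hn μ hrange
  have hint := integrable_exp_sampleVar hn μ hrange
  have hE : 0 ≤ ∫ z, sampleVar n z ∂Measure.pi μ := integral_nonneg fun x => by
    unfold sampleVar
    positivity
  generalize (∫ z, sampleVar n z ∂Measure.pi μ) = E at *
  obtain ⟨u, hu, hopt⟩ := exists_exponent hE hs
  calc ((Measure.pi μ) {X | sampleVar n X - E > s}).toReal
      ≤ (Measure.pi μ).real {X | E + s ≤ sampleVar n X} := by
        refine measureReal_mono fun x hx => ?_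
        simp only [Set.mem_ofPred_eq] at hx ⊢
        linarith
    _ ≤ Real.exp (-(((n : ℝ) - 1) * u) * (E + s)) *
          mgf (sampleVar n) (Measure.pi μ) (((n : ℝ) - 1) * u) :=
        measure_ge_le_exp_mul_mgf _ (mul_nonneg hn1 hu) (hint u hu)
    _ ≤ Real.exp (-(((n : ℝ) - 1) * u) * (E + s)) *
          Real.exp (((n : ℝ) - 1) * (Real.exp u - 1) * E) :=
        mul_le_mul_of_nonneg_left (hmgf u hu) (Real.exp_pos _).le
    _ = Real.exp (((n : ℝ) - 1) * ((Real.exp u - 1) * E - u * (E + s))) := by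
        rw [← Real.exp_add]
        congr 1
        ring
    _ ≤ Real.exp (((n : ℝ) - 1) * -(s ^ 2 / (2 * E + s))) :=
        Real.exp_le_exp.2 (mul_le_mul_of_nonneg_left hopt hn1)
    _ = Real.exp (-((n : ℝ) - 1) * s ^ 2 / (2 * E + s)) := by
        congr 1
        ring
end

section
/- Let n ≥ 2, t > 0 and define Φ(x, t) = P_n(x) + sqrt(2 V_n(x) t / n) + 7t/(3(n−1)) for x ∈ [0,1]^n. Then for all x, x' ∈ [0,1]^n, Φ(x, t) − Φ(x', t) ≤ (1 + 2 sqrt(t/n)) · ‖x − x'‖_∞. -/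
/-!
The map `x ↦ √(∑ᵢⱼ (xᵢ - xⱼ)²)` is a seminorm, being the Euclidean norm of the vector of pairwise
differences, and the square-root term of `Φ` is a constant multiple of it. The triangle inequality
thus reduces the increment of that term to its value at `d = x - x'`. There the diagonal terms
vanish and each of the `n (n - 1)` others is at most `(2‖d‖)²`, so the value is at most
`2 √(t/n) ‖d‖`. The sample mean is `1`-Lipschitz, and the last term of `Φ` cancels.
-/

open MeasureTheory

/-- `Φ(x,t) = Pₙ(x) + √(2Vₙ(x)t/n) + 7t/(3(n-1))`. -/
noncomputable def Phi (n : ℕ) (x : Fin n → ℝ) (t : ℝ) : ℝ :=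
  sampleMean n x + Real.sqrt (2 * sampleVar n x * t / n) + 7 * t / (3 * ((n : ℝ) - 1))

/-- Triangle inequality for the Euclidean norm of the vector of pairwise differences. -/
lemma sqrt_sum_sq_le (n : ℕ) (x y : Fin n → ℝ) :
    √(∑ i, ∑ j, (x i - x j) ^ 2) ≤
      √(∑ i, ∑ j, (y i - y j) ^ 2) + √(∑ i, ∑ j, ((x - y) i - (x - y) j) ^ 2) := by
  have key : ∀ z : Fin n → ℝ, √(∑ i, ∑ j, (z i - z j) ^ 2) =
      ‖(WithLp.toLp 2 (fun p : Fin n × Fin n => z p.1 - z p.2) :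
        EuclideanSpace ℝ (Fin n × Fin n))‖ := by
    intro z
    rw [EuclideanSpace.norm_eq, Fintype.sum_prod_type]
    simp
  rw [key, key, key]
  refine le_trans (le_of_eq ?_) (norm_add_le _ _)
  congr 1
  ext p
  simp only [PiLp.add_apply, Pi.sub_apply]
  ring

lemma sum_sq_le (n : ℕ) (d : Fin n → ℝ) :
    ∑ i, ∑ j, (d i - d j) ^ 2 ≤ (n : ℝ) * ((n : ℝ) - 1) * (2 * ‖d‖) ^ 2 := by
  have h : ∀ i j, (d i - d j) ^ 2 ≤ (2 * ‖d‖) ^ 2 - if i = j then (2 * ‖d‖) ^ 2 else 0 := by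
    intro i j
    split_ifs with hij
    · simp [hij]
    · have hi := abs_le.1 (norm_le_pi_norm d i)
      have hj := abs_le.1 (norm_le_pi_norm d j)
      rw [sub_zero]
      exact sq_le_sq' (by linarith) (by linarith)
  refine (Finset.sum_le_sum fun i _ => Finset.sum_le_sum fun j _ => h i j).trans (le_of_eq ?_)
  simp [Finset.sum_sub_distrib]
  ring

lemma sampleMean_sub_le (n : ℕ) (hn : 2 ≤ n) (x x' : Fin n → ℝ) :
    sampleMean n x - sampleMean n x' ≤ ‖x - x'‖ := by
  have hn' : (0 : ℝ) < n := by positivity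
  rw [sampleMean, sampleMean, ← sub_div, ← Finset.sum_sub_distrib, div_le_iff₀ hn']
  calc ∑ i, (x i - x' i) ≤ ∑ _i : Fin n, ‖x - x'‖ :=
        Finset.sum_le_sum fun i _ => (le_abs_self _).trans (norm_le_pi_norm (x - x') i)
    _ = ‖x - x'‖ * n := by simp [mul_comm]

/-- **Lemma 13 (i)**: `Φ(x,t) - Φ(x',t) ≤ (1 + 2√(t/n)) ‖x - x'‖_∞` (the norm on
`Fin n → ℝ` is the sup-norm). -/
theorem Phi_lipschitz (n : ℕ) (hn : 2 ≤ n) (t : ℝ) (ht : 0 < t)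
    (x x' : Fin n → ℝ) (hx : ∀ i, x i ∈ Set.Icc (0 : ℝ) 1)
    (hx' : ∀ i, x' i ∈ Set.Icc (0 : ℝ) 1) :
    Phi n x t - Phi n x' t ≤ (1 + 2 * Real.sqrt (t / n)) * ‖x - x'‖ := by
  have hn2 : (2 : ℝ) ≤ n := by exact_mod_cast hn
  have hm : (0 : ℝ) < (n : ℝ) * ((n : ℝ) - 1) := mul_pos (by linarith) (by linarith)
  have hn1 : (n : ℝ) - 1 ≠ 0 := by linarith
  have hV : ∀ z : Fin n → ℝ, √(2 * sampleVar n z * t / n) =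
      √(∑ i, ∑ j, (z i - z j) ^ 2) * √(t / n / ((n : ℝ) * ((n : ℝ) - 1))) := by
    intro z
    rw [← Real.sqrt_mul (by positivity), sampleVar]
    congr 1
    field_simp
  have hd : √(∑ i, ∑ j, ((x - x') i - (x - x') j) ^ 2) *
      √(t / n / ((n : ℝ) * ((n : ℝ) - 1))) ≤ 2 * √(t / n) * ‖x - x'‖ := by
    calc _ ≤ √((n : ℝ) * ((n : ℝ) - 1) * (2 * ‖x - x'‖) ^ 2) *
          √(t / n / ((n : ℝ) * ((n : ℝ) - 1))) := by
          gcongr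
          exact sum_sq_le n (x - x')
      _ = 2 * √(t / n) * ‖x - x'‖ := by
          rw [Real.sqrt_mul hm.le, Real.sqrt_sq (by positivity), Real.sqrt_div' _ hm.le]
          have := (Real.sqrt_pos.2 hm).ne'
          field_simp
  have htri := mul_le_mul_of_nonneg_right (sqrt_sum_sq_le n x x')
    (Real.sqrt_nonneg (t / n / ((n : ℝ) * ((n : ℝ) - 1))))
  have hmean := sampleMean_sub_le n hn x x'
  rw [Phi, Phi, hV, hV]
  linarith
end

section
/- Let n ≥ 2 and x, x' ∈ [0,1]^n. Then sqrt(V_n(x)) − sqrt(V_n(x')) ≤ sqrt(2) · ‖x − x'‖_∞. -/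
/-!
The map `x ↦ √(Vₙ(x))` is a multiple of the Euclidean norm of the vector of pairwise differences
`(xᵢ - xⱼ)_{i,j}`, hence a seminorm. The reverse triangle inequality bounds the left-hand side by
`√(Vₙ(x - x'))`, and `Vₙ(d) ≤ 2 ‖d‖²` because
`∑_{i,j} (dᵢ - dⱼ)² = 2n ∑ᵢ dᵢ² - 2 (∑ᵢ dᵢ)² ≤ 2n² ‖d‖²` and `n / (n - 1) ≤ 2`.
-/

open MeasureTheory

/-- The vector of all pairwise differences `xᵢ - xⱼ`, in Euclidean space. -/
noncomputable def pairDiff (n : ℕ) (x : Fin n → ℝ) : EuclideanSpace ℝ (Fin n × Fin n) :=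
  WithLp.toLp 2 fun p => x p.1 - x p.2

lemma sqrt_sampleVar (n : ℕ) (x : Fin n → ℝ) :
    Real.sqrt (sampleVar n x) = ‖pairDiff n x‖ / Real.sqrt (2 * (n : ℝ) * ((n : ℝ) - 1)) := by
  rw [sampleVar, Real.sqrt_div (by positivity), EuclideanSpace.norm_eq]
  simp [pairDiff, Fintype.sum_prod_type]

lemma pairDiff_sub (n : ℕ) (x y : Fin n → ℝ) :
    pairDiff n (x - y) = pairDiff n x - pairDiff n y := by
  ext p
  simp [pairDiff]
  ring

lemma sum_sq_diff_le (n : ℕ) (d : Fin n → ℝ) :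
    ∑ i, ∑ j, (d i - d j) ^ 2 ≤ 2 * (n : ℝ) ^ 2 * ‖d‖ ^ 2 := by
  have expand : ∑ i, ∑ j, (d i - d j) ^ 2 = 2 * n * ∑ i, d i ^ 2 - 2 * (∑ i, d i) ^ 2 := by
    simp only [sub_sq, Finset.sum_add_distrib, Finset.sum_sub_distrib, ← Finset.mul_sum,
      ← Finset.sum_mul, Finset.sum_const, Finset.card_univ, Fintype.card_fin, nsmul_eq_mul]
    ring
  have hsq : ∑ i, d i ^ 2 ≤ n * ‖d‖ ^ 2 := by
    have h : ∀ i ∈ Finset.univ, d i ^ 2 ≤ ‖d‖ ^ 2 := fun i _ =>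
      sq_le_sq' (neg_le_of_abs_le (norm_le_pi_norm d i)) (le_of_abs_le (norm_le_pi_norm d i))
    simpa using Finset.sum_le_card_nsmul Finset.univ _ _ h
  have hmul := mul_le_mul_of_nonneg_left hsq (by positivity : (0 : ℝ) ≤ 2 * n)
  rw [expand]
  nlinarith [sq_nonneg (∑ i, d i)]

lemma sampleVar_le_s14 (n : ℕ) (hn : 2 ≤ n) (d : Fin n → ℝ) : sampleVar n d ≤ 2 * ‖d‖ ^ 2 := by
  have hn' : (2 : ℝ) ≤ n := by exact_mod_cast hn
  have hpos : 0 < 2 * (n : ℝ) * ((n : ℝ) - 1) := mul_pos (by linarith) (by linarith)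
  rw [sampleVar, div_le_iff₀ hpos]
  refine (sum_sq_diff_le n d).trans ?_
  have hc : 2 * (n : ℝ) ^ 2 ≤ 2 * (2 * (n : ℝ) * ((n : ℝ) - 1)) := by nlinarith
  nlinarith [mul_le_mul_of_nonneg_right hc (sq_nonneg ‖d‖)]

/-- The empirical standard deviation is `√2`-Lipschitz in the sup-norm:
`√(Vₙ(x)) - √(Vₙ(x')) ≤ √2 ‖x - x'‖_∞` (the norm on `Fin n → ℝ` is the sup-norm). -/
theorem stdev_sup_lipschitz (n : ℕ) (hn : 2 ≤ n)
    (x x' : Fin n → ℝ) (hx : ∀ i, x i ∈ Set.Icc (0 : ℝ) 1)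
    (hx' : ∀ i, x' i ∈ Set.Icc (0 : ℝ) 1) :
    Real.sqrt (sampleVar n x) - Real.sqrt (sampleVar n x') ≤
      Real.sqrt 2 * ‖x - x'‖ := by
  calc Real.sqrt (sampleVar n x) - Real.sqrt (sampleVar n x')
      ≤ Real.sqrt (sampleVar n (x - x')) := by
        rw [sqrt_sampleVar, sqrt_sampleVar, sqrt_sampleVar, pairDiff_sub, ← sub_div]
        gcongr
        exact norm_sub_norm_le _ _
    _ ≤ Real.sqrt (2 * ‖x - x'‖ ^ 2) := Real.sqrt_le_sqrt (sampleVar_le_s14 n hn _)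
    _ = Real.sqrt 2 * ‖x - x'‖ := by
        rw [Real.sqrt_mul zero_le_two, Real.sqrt_sq (norm_nonneg _)]
end

section
/- Let X = (X_1, ..., X_n) and X' = (X'_1, ..., X'_n) be random vectors with values in 𝒳^n such that all the X_i and X'_i are independent and identically distributed, and let F : 𝒳^{2n} → [0,1] be measurable. Then E[F(X, X')] ≤ sup_{(x, x') ∈ 𝒳^{2n}} E_σ[ F( (σ, x, x'), (−σ, x, x') ) ], where σ = (σ_1, ..., σ_n) is a vector of independent random signs, each uniformly distributed on {−1, 1}. -/
/-!
Exchanging `xᵢ` and `x'ᵢ` for those `i` with `σᵢ = -1` preserves the joint law of the `2n` i.i.d.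
variables (`measurePreserving_mix`), because on the `i`-th pair it acts as the identity or as the
swap, both of which preserve `μ ⊗ μ`. Hence `𝔼 F(𝐗, 𝐗') = 𝔼 F((σ, 𝐗, 𝐗'), (-σ, 𝐗, 𝐗'))` for each
of the `2ⁿ` sign vectors `σ`. Averaging over `σ` under the integral and bounding the integrand
pointwise by its supremum, which is finite as `F ≤ 1`, gives the claim.
-/

open MeasureTheory

/-- `(σ, x, x')ᵢ = xᵢ` if `σᵢ = 1` (`true`) and `x'ᵢ` if `σᵢ = -1` (`false`). -/
def mix {𝒳 : Type*} {n : ℕ} (σ : Fin n → Bool) (x x' : Fin n → 𝒳) : Fin n → 𝒳 :=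
  fun i => if σ i then x i else x' i

theorem measurePreserving_mix {𝒳 : Type*} [MeasurableSpace 𝒳] {n : ℕ}
    (μ : Measure 𝒳) [IsProbabilityMeasure μ] (σ : Fin n → Bool) :
    MeasurePreserving
      (fun p : (Fin n → 𝒳) × (Fin n → 𝒳) => (mix σ p.1 p.2, mix (fun i => !σ i) p.1 p.2))
      ((Measure.pi fun _ : Fin n => μ).prod (Measure.pi fun _ : Fin n => μ))
      ((Measure.pi fun _ : Fin n => μ).prod (Measure.pi fun _ : Fin n => μ)) := by
  -- Regroup `(x, x')` as a vector of pairs, on which the exchange acts coordinatewise.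
  have he := measurePreserving_arrowProdEquivProdArrow 𝒳 𝒳 (Fin n) (fun _ => μ) (fun _ => μ)
  have hpi : MeasurePreserving
      (fun (a : Fin n → 𝒳 × 𝒳) i => (if σ i then id else Prod.swap : 𝒳 × 𝒳 → 𝒳 × 𝒳) (a i))
      (Measure.pi fun _ => μ.prod μ) (Measure.pi fun _ => μ.prod μ) := by
    refine measurePreserving_pi _ _ fun i => ?_
    split_ifs
    · exact MeasurePreserving.id _
    · exact Measure.measurePreserving_swap
  convert he.comp (hpi.comp he.symm) using 1
  funext p
  refine Prod.ext ?_ ?_ <;> funext i <;> cases h : σ i <;>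
    simp [mix, h, MeasurableEquiv.arrowProdEquivProdArrow, Equiv.arrowProdEquivProdArrow]

/-- **Lemma 14 (symmetrization)**: if `𝐗, 𝐗'` consist of `2n` i.i.d. `𝒳`-valued variables and
`F : 𝒳^{2n} → [0,1]`, then
`𝔼 F(𝐗,𝐗') ≤ sup_{(x,x')} 𝔼_σ F((σ,x,x'), (-σ,x,x'))`, where `σ` is a vector of `n`
independent uniform random signs (so `𝔼_σ` is the average over all `2ⁿ` sign vectors). -/
theorem symmetrization (𝒳 : Type*) [MeasurableSpace 𝒳] [Nonempty 𝒳] (n : ℕ)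
    (μ : Measure 𝒳) [IsProbabilityMeasure μ]
    (F : (Fin n → 𝒳) → (Fin n → 𝒳) → ℝ)
    (hmeas : Measurable (Function.uncurry F))
    (hrange : ∀ x x', F x x' ∈ Set.Icc (0 : ℝ) 1) :
    (∫ p, F p.1 p.2
        ∂((Measure.pi fun _ : Fin n => μ).prod (Measure.pi fun _ : Fin n => μ))) ≤
      ⨆ p : (Fin n → 𝒳) × (Fin n → 𝒳),
        (∑ σ : Fin n → Bool,
          F (mix σ p.1 p.2) (mix (fun i => !σ i) p.1 p.2)) / 2 ^ n := by
  set P := (Measure.pi fun _ : Fin n => μ).prod (Measure.pi fun _ : Fin n => μ)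
  set G : (Fin n → 𝒳) × (Fin n → 𝒳) → ℝ := fun p =>
    (∑ σ : Fin n → Bool, F (mix σ p.1 p.2) (mix (fun i => !σ i) p.1 p.2)) / 2 ^ n with hG
  have hint : ∀ σ : Fin n → Bool,
      Integrable (fun p => F (mix σ p.1 p.2) (mix (fun i => !σ i) p.1 p.2)) P := fun σ =>
    Integrable.of_bound (hmeas.comp (measurePreserving_mix μ σ).measurable).aestronglyMeasurable 1
      (.of_forall fun p => by
        rw [Real.norm_eq_abs, abs_of_nonneg (hrange _ _).1]
        exact (hrange _ _).2)
  have hinv : ∀ σ : Fin n → Bool,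
      ∫ p, F (mix σ p.1 p.2) (mix (fun i => !σ i) p.1 p.2) ∂P = ∫ p, F p.1 p.2 ∂P := fun σ => by
    have hm : MeasurePreserving _ P P := measurePreserving_mix μ σ
    conv_rhs => rw [← hm.map_eq]
    exact (integral_map hm.measurable.aemeasurable hmeas.aestronglyMeasurable).symm
  have havg : ∫ p, F p.1 p.2 ∂P = ∫ p, G p ∂P := by
    rw [hG, integral_div, integral_finsetSum _ fun σ _ => hint σ]
    simp [hinv]
  have hbdd : BddAbove (Set.range G) := by
    refine ⟨1, ?_⟩
    rintro _ ⟨p, rfl⟩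
    rw [hG, div_le_one (by positivity)]
    calc _ ≤ ∑ _σ : Fin n → Bool, (1 : ℝ) := Finset.sum_le_sum fun σ _ => (hrange _ _).2
      _ = 2 ^ n := by simp
  calc ∫ p, F p.1 p.2 ∂P = ∫ p, G p ∂P := havg
    _ ≤ ∫ _, (⨆ q, G q) ∂P :=
      integral_mono ((integrable_finsetSum _ fun σ _ => hint σ).div_const _)
        (integrable_const _) fun p => le_ciSup hbdd p
    _ = ⨆ q, G q := by simp
end

section
/- Let n ≥ 2, t > 0, let f : 𝒳 → [0,1] be a fixed function and (x, x') ∈ 𝒳^n × 𝒳^n fixed. Let σ = (σ_1, ..., σ_n) be a vector of independent random signs, each uniformly distributed on {−1, 1}. Then Pr_σ{ Φ( f(σ, x, x'), t ) > Ψ( f(−σ, x, x'), t ) } ≤ 5 e^{−t}. -/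
/-!
Write `y = f(σ, x, x')`, `y' = f(-σ, x, x')`, `aᵢ = f(xᵢ)`, `bᵢ = f(x'ᵢ)`. Then
`yᵢ - y'ᵢ = σᵢ dᵢ` with `dᵢ = aᵢ - bᵢ ∈ [-1, 1]`, while the midpoint
`mᵢ = (yᵢ + y'ᵢ)/2 = (aᵢ + bᵢ)/2` does not depend on `σ`. With the centred sum of squares
`G(z) = ∑ zᵢ² - (∑ zᵢ)²/n = (n - 1) Vₙ(z)`, the two quantities that matter are *linear* in `σ`:

* `n (Pₙ(y) - Pₙ(y')) = S := ∑ σᵢ dᵢ`,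
* `G(y) - G(y') = 2 ∑ σᵢ (mᵢ - m̄) dᵢ`.

Hoeffding's inequality for Rademacher sums (`rademacher_tail`), applied to each of them, shows that
outside an event of probability `2 e^{-t}` one has `S ≤ √(2tD)` with `D = ∑ dᵢ²`, and
`G(y) - G(y') ≤ 2 √(2t G(m))`. On that event `Φ(y, t) ≤ Ψ(y', t)` holds deterministically
(`deterministic_bound`): by the parallelogram identity `G(y) + G(y') = 2 G(m) + (D - S²/n)/2`,
the second bound yields `√G(y) ≤ √G(y') + 2√t`, and both bounds together control `D`, hence `S`,
by `G(y') + t`. So the probability is even at most `2 e^{-t}`.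
-/

open MeasureTheory

/-- `Ψ(x,t) = Pₙ(x) + √(18Vₙ(x)t/n) + 11t/(n-1)`. -/
noncomputable def Psi (n : ℕ) (x : Fin n → ℝ) (t : ℝ) : ℝ :=
  sampleMean n x + Real.sqrt (18 * sampleVar n x * t / n) + 11 * t / ((n : ℝ) - 1)

/-- The sign in `{-1, 1}` encoded by a Boolean, `true` being `1`. -/
def boolSign (b : Bool) : ℝ := if b then 1 else -1

/-- The centred sum of squares `∑ zᵢ² - (∑ zᵢ)²/n = ∑ (zᵢ - z̄)²`. -/
noncomputable def centredSq (n : ℕ) (z : Fin n → ℝ) : ℝ := ∑ i, z i ^ 2 - (∑ i, z i) ^ 2 / n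

lemma rademacher_mgf {n : ℕ} (c : Fin n → ℝ) (l : ℝ) :
    ∑ σ : Fin n → Bool, Real.exp (l * ∑ i, boolSign (σ i) * c i)
      ≤ 2 ^ n * Real.exp (l ^ 2 * (∑ i, c i ^ 2) / 2) := by
  have h1 : ∑ σ : Fin n → Bool, Real.exp (l * ∑ i, boolSign (σ i) * c i)
      = ∏ i, ∑ b : Bool, Real.exp (l * (boolSign b * c i)) := by
    rw [Finset.prod_univ_sum]
    simp only [Fintype.piFinset_univ]
    refine Finset.sum_congr rfl fun σ _ => ?_
    rw [Finset.mul_sum, Real.exp_sum]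
  rw [h1]
  calc ∏ i, ∑ b : Bool, Real.exp (l * (boolSign b * c i))
      ≤ ∏ i, (2 * Real.exp ((l * c i) ^ 2 / 2)) := by
        refine Finset.prod_le_prod (fun i _ => Finset.sum_nonneg fun b _ => (Real.exp_pos _).le)
          fun i _ => ?_
        have := Real.cosh_le_exp_half_sq (l * c i)
        rw [Real.cosh_eq] at this
        simp only [Fintype.sum_bool, boolSign, if_true, Bool.false_eq_true, if_false]
        simp only [one_mul, neg_mul, mul_neg]
        linarith
    _ = 2 ^ n * Real.exp (l ^ 2 * (∑ i, c i ^ 2) / 2) := by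
        rw [Finset.prod_mul_distrib, ← Real.exp_sum]
        simp only [Finset.prod_const, Finset.card_univ, Fintype.card_fin]
        congr 2
        rw [Finset.mul_sum, Finset.sum_div]
        exact Finset.sum_congr rfl fun i _ => by ring

open scoped Classical in
/-- Hoeffding's inequality for Rademacher sums, in counting form. -/
lemma rademacher_tail {n : ℕ} (c : Fin n → ℝ) (t : ℝ) (ht : 0 < t) :
    ((Finset.univ.filter fun σ : Fin n → Bool =>
      Real.sqrt (2 * t * ∑ i, c i ^ 2) < ∑ i, boolSign (σ i) * c i).card : ℝ)
      ≤ 2 ^ n * Real.exp (-t) := by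
  set C := ∑ i, c i ^ 2 with hC
  have hC0 : 0 ≤ C := Finset.sum_nonneg fun i _ => sq_nonneg _
  rcases hC0.eq_or_lt with h0 | hpos
  · -- if `C = 0` then all coefficients vanish and the event is empty
    have hc : ∀ i, c i = 0 := fun i => by
      have := (Finset.sum_eq_zero_iff_of_nonneg (fun i _ => sq_nonneg (c i))).1 h0.symm i
        (Finset.mem_univ i)
      simpa using this
    have he : (Finset.univ.filter fun σ : Fin n → Bool =>
        Real.sqrt (2 * t * C) < ∑ i, boolSign (σ i) * c i) = ∅ := by
      simp [← h0, hc]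
    rw [he]
    simp only [Finset.card_empty, Nat.cast_zero]
    positivity
  · -- Chernoff bound with the optimal parameter `l = √(2t/C)`
    set l := Real.sqrt (2 * t / C) with hl
    have hl2 : l ^ 2 * C = 2 * t := by
      rw [hl, Real.sq_sqrt (by positivity)]; field_simp
    have hls : l * Real.sqrt (2 * t * C) = 2 * t := by
      rw [hl, ← Real.sqrt_mul (by positivity)]
      rw [show 2 * t / C * (2 * t * C) = (2 * t) ^ 2 by field_simp]
      exact Real.sqrt_sq (by positivity)
    have hmgf := rademacher_mgf c l
    rw [← hC, hl2, show 2 * t / 2 = t by ring] at hmgf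
    have hcard : ((Finset.univ.filter fun σ : Fin n → Bool =>
        Real.sqrt (2 * t * C) < ∑ i, boolSign (σ i) * c i).card : ℝ) * Real.exp (2 * t)
        ≤ ∑ σ : Fin n → Bool, Real.exp (l * ∑ i, boolSign (σ i) * c i) := by
      rw [← nsmul_eq_mul, ← Finset.sum_const]
      refine le_trans (Finset.sum_le_sum fun σ hσ => ?_)
        (Finset.sum_le_sum_of_subset_of_nonneg (Finset.filter_subset _ _)
          fun σ _ _ => (Real.exp_pos _).le)
      rw [Finset.mem_filter] at hσ
      apply Real.exp_le_exp.2
      rw [← hls]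
      exact mul_le_mul_of_nonneg_left hσ.2.le (Real.sqrt_nonneg _)
    have h3 := hcard.trans hmgf
    rw [← mul_le_mul_iff_left₀ (Real.exp_pos (2 * t))]
    refine h3.trans (le_of_eq ?_)
    rw [mul_assoc, ← Real.exp_add]
    congr 2; ring

lemma sampleVar_eq_s16 (n : ℕ) (hn : 2 ≤ n) (z : Fin n → ℝ) :
    sampleVar n z = centredSq n z / ((n : ℝ) - 1) := by
  have hn' : (2 : ℝ) ≤ n := by exact_mod_cast hn
  have h : ∑ i, ∑ j, (z i - z j) ^ 2 = 2 * n * ∑ i, z i ^ 2 - 2 * (∑ i, z i) ^ 2 := by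
    have : ∀ i j, (z i - z j) ^ 2 = z i ^ 2 + z j ^ 2 - 2 * (z i * z j) := fun i j => by ring
    simp only [this, Finset.sum_sub_distrib, Finset.sum_add_distrib, Finset.sum_const,
      Finset.card_univ, Fintype.card_fin, nsmul_eq_mul, ← Finset.mul_sum]
    rw [← Finset.sum_mul]
    ring
  have h1 : (n : ℝ) - 1 ≠ 0 := by linarith
  have h2 : (n : ℝ) ≠ 0 := by linarith
  rw [sampleVar, h, centredSq]
  field_simp

lemma centredSq_eq (n : ℕ) (hn : 2 ≤ n) (z : Fin n → ℝ) :
    centredSq n z = ∑ i, (z i - (∑ j, z j) / n) ^ 2 := by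
  have hn' : (n : ℝ) ≠ 0 := by
    have : n ≠ 0 := by omega
    exact_mod_cast this
  have : ∀ i, (z i - (∑ j, z j) / n) ^ 2
      = z i ^ 2 - 2 * ((∑ j, z j) / n) * z i + ((∑ j, z j) / n) ^ 2 := fun i => by ring
  simp only [this, Finset.sum_sub_distrib, Finset.sum_add_distrib, Finset.sum_const,
    Finset.card_univ, Fintype.card_fin, nsmul_eq_mul, ← Finset.mul_sum]
  rw [centredSq]
  field_simp
  ring

lemma centredSq_nonneg (n : ℕ) (hn : 2 ≤ n) (z : Fin n → ℝ) : 0 ≤ centredSq n z := by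
  rw [centredSq_eq n hn]
  exact Finset.sum_nonneg fun i _ => sq_nonneg _

/-- The scalar inequality behind `Φ(y, t) ≤ Ψ(y', t)`, with `A = G(y)`, `B = G(y')`, `M = G(m)`
in terms of the centred sum of squares `G`; `hSN` is `G(y - y') ≥ 0`. -/
lemma deterministic_bound (N A B M D S t : ℝ) (hN : 2 ≤ N) (ht : 0 < t) (hA : 0 ≤ A) (hB : 0 ≤ B)
    (hM : 0 ≤ M) (hD : 0 ≤ D) (hDN : D ≤ N) (hSN : 0 ≤ D - S ^ 2 / N)
    (hAB : A - B ≤ 2 * Real.sqrt (2 * t * M)) (hpar : A + B = 2 * M + (D - S ^ 2 / N) / 2)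
    (hS : S ≤ Real.sqrt (2 * t * D)) :
    S / N + Real.sqrt (2 * (A / (N - 1)) * t / N) + 7 * t / (3 * (N - 1)) ≤
      Real.sqrt (18 * (B / (N - 1)) * t / N) + 11 * t / (N - 1) := by
  obtain ⟨s, hs, rfl⟩ : ∃ s, 0 < s ∧ t = s ^ 2 :=
    ⟨Real.sqrt t, Real.sqrt_pos.2 ht, (Real.sq_sqrt ht.le).symm⟩
  obtain ⟨a, ha, rfl⟩ : ∃ a, 0 ≤ a ∧ A = a ^ 2 :=
    ⟨Real.sqrt A, Real.sqrt_nonneg _, (Real.sq_sqrt hA).symm⟩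
  obtain ⟨b, hb, rfl⟩ : ∃ b, 0 ≤ b ∧ B = b ^ 2 :=
    ⟨Real.sqrt B, Real.sqrt_nonneg _, (Real.sq_sqrt hB).symm⟩
  set q := Real.sqrt (2 * s ^ 2 * M) with hq
  have hq0 : 0 ≤ q := Real.sqrt_nonneg _
  have hq2 : q ^ 2 = 2 * s ^ 2 * M := Real.sq_sqrt (by positivity)
  obtain ⟨w, hw, hw0⟩ : ∃ w, w = Real.sqrt 2 ∧ 0 < w := ⟨_, rfl, by positivity⟩
  have hw2 : w ^ 2 = 2 := by rw [hw]; exact Real.sq_sqrt (by norm_num)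
  have hN1 : 0 < N - 1 := by linarith
  have hab : a ≤ b + 2 * s := by
    have hqle : q ≤ s * (a + b) := by
      apply le_of_sq_le_sq _ (by positivity)
      rw [hq2]
      have : 2 * M ≤ (a + b) ^ 2 := by nlinarith [mul_nonneg ha hb]
      calc 2 * s ^ 2 * M = s ^ 2 * (2 * M) := by ring
        _ ≤ s ^ 2 * (a + b) ^ 2 := by gcongr
        _ = _ := by ring
    by_contra! hlt
    nlinarith [mul_nonneg ha hb]
  have hSb : S ≤ w * s * (2 * b + 2 * s) := by
    rcases le_or_gt S 0 with hneg | hpos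
    · exact hneg.trans (by positivity)
    have hS2 : S ^ 2 ≤ 2 * s ^ 2 * D := by
      have := pow_le_pow_left₀ hpos.le hS 2
      rwa [Real.sq_sqrt (by positivity)] at this
    have hSN2 : S ^ 2 / N ≤ 2 * s ^ 2 := by
      rw [div_le_iff₀ (by linarith)]
      exact hS2.trans (by gcongr)
    -- AM-GM: `q = √2 s √M ≤ M + s²/2`
    have hqM : q ≤ M + s ^ 2 / 2 := by
      apply le_of_sq_le_sq _ (by positivity)
      rw [hq2]
      nlinarith [sq_nonneg (M - s ^ 2 / 2)]
    have hDb : D ≤ 4 * b ^ 2 + 4 * s ^ 2 := by linarith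
    apply le_of_sq_le_sq _ (by positivity)
    have : D ≤ (2 * b + 2 * s) ^ 2 := by nlinarith [mul_nonneg hb hs.le]
    calc S ^ 2 ≤ 2 * s ^ 2 * D := hS2
      _ ≤ 2 * s ^ 2 * (2 * b + 2 * s) ^ 2 := by gcongr
      _ = (w * s * (2 * b + 2 * s)) ^ 2 := by rw [← hw2]; ring
  obtain ⟨k, hk0, hk2⟩ : ∃ k, 0 < k ∧ k ^ 2 = N * (N - 1) :=
    ⟨Real.sqrt (N * (N - 1)), Real.sqrt_pos.2 (by positivity), Real.sq_sqrt (by positivity)⟩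
  have hkN : k ≤ N := le_of_sq_le_sq (by nlinarith) (by linarith)
  have hkN1 : N - 1 ≤ k := le_of_sq_le_sq (by nlinarith) hk0.le
  have e1 : Real.sqrt (2 * (a ^ 2 / (N - 1)) * s ^ 2 / N) = w * s * a / k := by
    rw [show 2 * (a ^ 2 / (N - 1)) * s ^ 2 / N = (w * s * a / k) ^ 2 by
      rw [div_pow, hk2, mul_pow, mul_pow, hw2]; field_simp]
    exact Real.sqrt_sq (by positivity)
  have e2 : Real.sqrt (18 * (b ^ 2 / (N - 1)) * s ^ 2 / N) = 3 * w * s * b / k := by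
    rw [show 18 * (b ^ 2 / (N - 1)) * s ^ 2 / N = (3 * w * s * b / k) ^ 2 by
      rw [div_pow, hk2, mul_pow, mul_pow, mul_pow, hw2]; field_simp; ring]
    exact Real.sqrt_sq (by positivity)
  rw [e1, e2]
  have hSk : S / N ≤ w * s * (2 * b + 2 * s) / k :=
    calc S / N ≤ w * s * (2 * b + 2 * s) / N := by gcongr
      _ ≤ _ := by gcongr
  have hak : w * s * a / k ≤ w * s * (b + 2 * s) / k := by gcongr
  have hw4 : 4 * w ≤ 26 / 3 := by nlinarith
  have hlast : 4 * w * s ^ 2 / k ≤ 26 / 3 * s ^ 2 / (N - 1) := by gcongr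
  have i1 : w * s * (2 * b + 2 * s) / k + w * s * (b + 2 * s) / k
      = 3 * w * s * b / k + 4 * w * s ^ 2 / k := by ring
  have i2 : 11 * s ^ 2 / (N - 1) - 7 * s ^ 2 / (3 * (N - 1)) = 26 / 3 * s ^ 2 / (N - 1) := by
    field_simp; ring
  linarith

/-- `Φ(y, t) ≤ Ψ(y', t)` once both linear forms obey their Hoeffding bounds; `m` is the
midpoint of `y` and `y'`. -/
lemma Phi_le_Psi (n : ℕ) (hn : 2 ≤ n) (t : ℝ) (ht : 0 < t) (y y' m : Fin n → ℝ)
    (hd : ∀ i, (y i - y' i) ^ 2 ≤ 1) (hm : ∀ i, m i = (y i + y' i) / 2)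
    (hS : ∑ i, (y i - y' i) ≤ Real.sqrt (2 * t * ∑ i, (y i - y' i) ^ 2))
    (hT : ∑ i, (m i - (∑ j, m j) / n) * (y i - y' i) ≤
      Real.sqrt (2 * t * ∑ i, ((m i - (∑ j, m j) / n) * (y i - y' i)) ^ 2)) :
    Phi n y t ≤ Psi n y' t := by
  have hn' : (2 : ℝ) ≤ n := by exact_mod_cast hn
  have hm' : m = fun i => (y i + y' i) / 2 := funext hm
  have hsm : ∑ i, m i = (∑ i, y i + ∑ i, y' i) / 2 := by
    rw [hm', ← Finset.sum_div, Finset.sum_add_distrib]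
  have hsd : ∑ i, (y i - y' i) = ∑ i, y i - ∑ i, y' i := Finset.sum_sub_distrib _ _
  have hdiff : centredSq n y - centredSq n y'
      = 2 * ∑ i, (m i - (∑ j, m j) / n) * (y i - y' i) := by
    have h1 : ∑ i, m i * (y i - y' i) = (∑ i, y i ^ 2 - ∑ i, y' i ^ 2) / 2 := by
      rw [← Finset.sum_sub_distrib, Finset.sum_div]
      exact Finset.sum_congr rfl fun i _ => by rw [hm]; ring
    simp only [sub_mul, Finset.sum_sub_distrib, ← Finset.mul_sum]
    rw [h1, hsm, centredSq, centredSq]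
    ring
  have hpar : centredSq n y + centredSq n y' = 2 * centredSq n m
      + (∑ i, (y i - y' i) ^ 2 - (∑ i, (y i - y' i)) ^ 2 / n) / 2 := by
    have h1 : 2 * ∑ i, m i ^ 2 + (∑ i, (y i - y' i) ^ 2) / 2
        = ∑ i, y i ^ 2 + ∑ i, y' i ^ 2 := by
      rw [← Finset.sum_add_distrib, Finset.mul_sum, Finset.sum_div, ← Finset.sum_add_distrib]
      exact Finset.sum_congr rfl fun i _ => by rw [hm]; ring
    rw [hsd, centredSq, centredSq, centredSq, hsm]
    linear_combination -h1
  have hTM : ∑ i, (m i - (∑ j, m j) / n) * (y i - y' i) ≤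
      Real.sqrt (2 * t * centredSq n m) := by
    refine hT.trans (Real.sqrt_le_sqrt ?_)
    rw [centredSq_eq n hn]
    refine mul_le_mul_of_nonneg_left (Finset.sum_le_sum fun i _ => ?_) (by positivity)
    rw [mul_pow]
    exact mul_le_of_le_one_right (sq_nonneg _) (hd i)
  have hDn : ∑ i, (y i - y' i) ^ 2 ≤ n := by
    simpa using Finset.sum_le_sum fun i (_ : i ∈ Finset.univ) => hd i
  have key := deterministic_bound n (centredSq n y) (centredSq n y') (centredSq n m)
    (∑ i, (y i - y' i) ^ 2) (∑ i, (y i - y' i)) t hn' ht (centredSq_nonneg n hn y)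
    (centredSq_nonneg n hn y') (centredSq_nonneg n hn m)
    (Finset.sum_nonneg fun i _ => sq_nonneg _) hDn
    (centredSq_nonneg n hn fun i => y i - y' i) (by linarith) hpar hS
  rw [hsd, sub_div] at key
  rw [Phi, Psi, sampleVar_eq_s16 n hn, sampleVar_eq_s16 n hn, sampleMean, sampleMean]
  linarith

open scoped Classical in
/-- **Lemma 15**: for fixed `f : 𝒳 → [0,1]` and fixed `(x, x') ∈ 𝒳^{2n}`, over a uniform
random sign vector `σ ∈ {-1,1}ⁿ`,
`Pr_σ{ Φ(f(σ,x,x'), t) > Ψ(f(-σ,x,x'), t) } ≤ 5 e^{-t}`. -/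
theorem phi_psi_probability_bound (𝒳 : Type*) (n : ℕ) (hn : 2 ≤ n)
    (t : ℝ) (ht : 0 < t) (f : 𝒳 → ℝ) (hf : ∀ z, f z ∈ Set.Icc (0 : ℝ) 1)
    (x x' : Fin n → 𝒳) :
    ((Finset.univ.filter fun σ : Fin n → Bool =>
        Phi n (fun i => f (mix σ x x' i)) t >
          Psi n (fun i => f (mix (fun j => !σ j) x x' i)) t).card : ℝ) / 2 ^ n ≤
      5 * Real.exp (-t) := by
  set d : Fin n → ℝ := fun i => f (x i) - f (x' i) with hd
  set m : Fin n → ℝ := fun i => (f (x i) + f (x' i)) / 2 with hm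
  set e : Fin n → ℝ := fun i => (m i - (∑ j, m j) / n) * d i with he
  have hsub : (Finset.univ.filter fun σ : Fin n → Bool =>
        Phi n (fun i => f (mix σ x x' i)) t >
          Psi n (fun i => f (mix (fun j => !σ j) x x' i)) t) ⊆
      (Finset.univ.filter fun σ : Fin n → Bool =>
        Real.sqrt (2 * t * ∑ i, d i ^ 2) < ∑ i, boolSign (σ i) * d i) ∪
      (Finset.univ.filter fun σ : Fin n → Bool =>
        Real.sqrt (2 * t * ∑ i, e i ^ 2) < ∑ i, boolSign (σ i) * e i) := by
    intro σ hσ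
    simp only [Finset.mem_union, Finset.mem_filter, Finset.mem_univ, true_and] at hσ ⊢
    by_contra! hcon
    have hyd : ∀ i, f (mix σ x x' i) - f (mix (fun j => !σ j) x x' i)
        = boolSign (σ i) * d i := fun i => by
      cases h : σ i <;> simp [mix, boolSign, h, hd]
    have hsq : ∀ b, boolSign b ^ 2 = 1 := fun b => by cases b <;> simp [boolSign]
    refine absurd (Phi_le_Psi n hn t ht _ _ m ?_ ?_ ?_ ?_) (not_le.2 hσ)
    · intro i
      rw [hyd, mul_pow, hsq, one_mul]
      have h1 := hf (x i)
      have h2 := hf (x' i)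
      rw [Set.mem_Icc] at h1 h2
      rw [sq_le_one_iff_abs_le_one, abs_le]
      constructor <;> simp only [hd] <;> linarith
    · intro i
      cases h : σ i <;> simp [mix, h, hm, add_comm]
    · simp only [hyd, mul_pow, hsq, one_mul]
      exact hcon.1
    · have h2 : ∀ i, (m i - (∑ j, m j) / n) *
          (f (mix σ x x' i) - f (mix (fun j => !σ j) x x' i)) = boolSign (σ i) * e i := fun i => by
        rw [hyd, he]; ring
      simp only [h2, mul_pow, hsq, one_mul]
      exact hcon.2
  have hcard := (Nat.cast_le (α := ℝ)).2
    ((Finset.card_le_card hsub).trans (Finset.card_union_le _ _))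
  rw [Nat.cast_add] at hcard
  have h1 := rademacher_tail d t ht
  have h2 := rademacher_tail e t ht
  rw [div_le_iff₀ (by positivity)]
  have hpos : 0 < 2 ^ n * Real.exp (-t) := by positivity
  linarith
end

section
/- Let 0 < ε ≤ 1/sqrt(8) and let n be an integer with n ≥ ε^{−2}. Let Y_1, ..., Y_n be i.i.d. Bernoulli random variables with Pr{Y_i = 1} = 1/2 + ε and Pr{Y_i = 0} = 1/2 − ε. Then Pr{ (1/n) ∑_{i=1}^n Y_i < 1/2 } ≥ exp(−8 n ε²). Consequently the excess risk of empirical risk minimization in the two-hypothesis class {c_{1/2}, b_{1/2+ε}} (where c_{1/2} has constant loss 1/2 and b_{1/2+ε} has Bernoulli(1/2+ε) loss) is at least ε = sqrt(ln(1/δ)/(8n)) with probability at least δ = exp(−8nε²). -/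
open MeasureTheory

/-!
Write `p = 1/2 + ε`, `q = 1/2 - ε`, and identify an outcome in `{0,1}ⁿ` with the set `s` of indices
where it equals `1`, which has probability `w s = p^|s| q^(n-|s|)`. Let `A` be the family of
sets with `2|s| < n`. By Cauchy–Schwarz, `|A|² ≤ (∑_{s ∈ A} w s) (∑_{s ∈ A} 1 / w s)`, and the second
factor is at most the sum over all sets, `(1/p + 1/q)ⁿ = (pq)⁻ⁿ`. Hence
`Pr(A) ≥ |A|² (pq)ⁿ = (|A| / 2ⁿ)² (1 - 4ε²)ⁿ` (`weight_lower_bound`).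

Complementation and the estimate `5 C(2m, m) ≤ 2 · 4ᵐ` for `m ≥ 4` give `|A| ≥ (3/10) 2ⁿ`
(`card_minority`); here `n ≥ ε⁻² ≥ 8`. Finally `1 - x ≥ exp(-2 x log 2)` on `[0, 1/2]`, applied with
`x = 4ε²`, and `9/100 ≥ exp(-49/20)` give the bound (`numeric_bound`), because `nε² ≥ 1`
and `8 log 2 + 49/20 ≤ 8`.
-/

lemma five_mul_centralBinom_le (m : ℕ) (hm : 4 ≤ m) : 5 * m.centralBinom ≤ 2 * 4 ^ m := by
  induction m, hm using Nat.le_induction with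
  | base => decide
  | succ k hk ih =>
    have h := Nat.succ_mul_centralBinom_succ k
    have h2 : (k + 1) * (5 * (k + 1).centralBinom) ≤ (k + 1) * (2 * 4 ^ (k + 1)) := by
      rw [pow_succ]
      nlinarith
    exact Nat.le_of_mul_le_mul_left h2 (by omega)

/-- The family of index sets containing fewer than half of the indices. -/
def minority (n : ℕ) : Finset (Finset (Fin n)) := Finset.univ.filter fun s => 2 * s.card < n

/-- Complementation is a bijection between the sets below and above half size, so only the sets of
size exactly `n / 2` have to be discounted. -/
lemma card_minority (n : ℕ) (hn : 8 ≤ n) : 3 * 2 ^ n ≤ 10 * (minority n).card := by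
  classical
  have hc : (Finset.univ.filter fun s : Finset (Fin n) => n < 2 * s.card).card
      = (minority n).card := by
    refine Finset.card_bij' (fun s _ => sᶜ) (fun s _ => sᶜ) ?_ ?_ (by simp) (by simp)
    · intro s hs
      have := Finset.card_add_card_compl s
      rw [Fintype.card_fin] at this
      simp only [minority, Finset.mem_filter, Finset.mem_univ, true_and] at hs ⊢
      omega
    · intro s hs
      have := Finset.card_add_card_compl s
      rw [Fintype.card_fin] at this
      simp only [minority, Finset.mem_filter, Finset.mem_univ, true_and] at hs ⊢
      omega
  have hm : 5 * (Finset.univ.filter fun s : Finset (Fin n) => 2 * s.card = n).card ≤ 2 * 2 ^ n := by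
    rcases Nat.even_or_odd' n with ⟨m, rfl | rfl⟩
    · have : (Finset.univ.filter fun s : Finset (Fin (2 * m)) => 2 * s.card = 2 * m)
          = Finset.powersetCard m Finset.univ := by
        ext s; simp [Finset.mem_powersetCard]
      rw [this, Finset.card_powersetCard, Finset.card_univ, Fintype.card_fin, pow_mul,
        ← Nat.centralBinom_eq_two_mul_choose]
      exact five_mul_centralBinom_le m (by omega)
    · rw [Finset.filter_eq_empty_iff.2 (fun s _ => by omega)]
      simp
  have htot : (minority n).card
      + ((Finset.univ.filter fun s : Finset (Fin n) => 2 * s.card = n).card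
      + (Finset.univ.filter fun s : Finset (Fin n) => n < 2 * s.card).card) = 2 ^ n := by
    rw [minority, ← Finset.card_union_of_disjoint, ← Finset.card_union_of_disjoint]
    · rw [← Finset.filter_or, ← Finset.filter_or, Finset.filter_true_of_mem (fun s _ => by omega)]
      simp
    · rw [← Finset.filter_or]
      exact Finset.disjoint_filter.2 (fun s _ => by omega)
    · exact Finset.disjoint_filter.2 (fun s _ => by omega)
  omega

/-- Cauchy–Schwarz against the reciprocal weights, whose total over all sets is
`(1/p + 1/q)ⁿ = (pq)⁻ⁿ` when `p + q = 1`. -/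
lemma weight_lower_bound (n : ℕ) (p q : ℝ) (hp : 0 < p) (hq : 0 < q) (hpq : p + q = 1)
    (A : Finset (Finset (Fin n))) :
    (A.card : ℝ) ^ 2 * (p * q) ^ n ≤ ∑ s ∈ A, p ^ s.card * q ^ (n - s.card) := by
  have hcs : (∑ s ∈ A, (1 : ℝ)) ^ 2 ≤ (∑ s ∈ A, p ^ s.card * q ^ (n - s.card)) *
      ∑ s ∈ A, p⁻¹ ^ s.card * q⁻¹ ^ (n - s.card) := by
    refine Finset.sum_sq_le_sum_mul_sum_of_sq_le_mul A (fun s _ => by positivity)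
      (fun s _ => by positivity) (fun s _ => le_of_eq ?_)
    rw [mul_mul_mul_comm, ← mul_pow, ← mul_pow, mul_inv_cancel₀ hp.ne', mul_inv_cancel₀ hq.ne']
    simp
  have hinv : ∑ s ∈ A, p⁻¹ ^ s.card * q⁻¹ ^ (n - s.card) ≤ ((p * q) ^ n)⁻¹ := by
    have hall := Fin.sum_pow_mul_eq_add_pow (n := n) p⁻¹ q⁻¹
    have hsum : p⁻¹ + q⁻¹ = (p * q)⁻¹ := by
      field_simp
      linarith
    rw [hsum, inv_pow] at hall
    rw [← hall]
    exact Finset.sum_le_sum_of_subset_of_nonneg (Finset.subset_univ _)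
      (fun s _ _ => by positivity)
  have hpos : 0 < (p * q) ^ n := by positivity
  have hnn : 0 ≤ ∑ s ∈ A, p ^ s.card * q ^ (n - s.card) :=
    Finset.sum_nonneg fun s _ => by positivity
  rw [← le_div_iff₀ hpos, div_eq_mul_inv]
  calc (A.card : ℝ) ^ 2 = (∑ s ∈ A, (1 : ℝ)) ^ 2 := by simp
    _ ≤ _ := hcs
    _ ≤ _ := mul_le_mul_of_nonneg_left hinv hnn

/-- On `[0, 1/2]` the convex function `exp(-2 x log 2)` lies below its chord `1 - x`. -/
lemma exp_le_one_sub (x : ℝ) (hx0 : 0 ≤ x) (hx : x ≤ 1 / 2) :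
    Real.exp (-(2 * Real.log 2 * x)) ≤ 1 - x := by
  have h := convexOn_exp.2 (Set.mem_univ 0) (Set.mem_univ (-Real.log 2))
    (show 0 ≤ 1 - 2 * x by linarith) (show 0 ≤ 2 * x by linarith) (by ring)
  simp only [smul_eq_mul, Real.exp_zero, Real.exp_neg (Real.log 2),
    Real.exp_log (show (0 : ℝ) < 2 by norm_num)] at h
  calc _ = Real.exp ((1 - 2 * x) * 0 + 2 * x * -Real.log 2) := by ring_nf
    _ ≤ _ := h
    _ = 1 - x := by ring

lemma numeric_bound (n : ℕ) (ε : ℝ) (hε : ε ^ 2 ≤ 1 / 8) (hn : 1 ≤ n * ε ^ 2) :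
    Real.exp (-8 * (n : ℝ) * ε ^ 2) ≤ 9 / 100 * (1 - 4 * ε ^ 2) ^ n := by
  have hpow := pow_le_pow_left₀ (Real.exp_pos _).le
    (exp_le_one_sub (4 * ε ^ 2) (by positivity) (by linarith)) n
  rw [← Real.exp_nat_mul] at hpow
  have hconst : Real.exp (-(49 / 20)) ≤ 9 / 100 := by
    have h1 := Real.exp_one_gt_d9
    have h2 := Real.quadratic_le_exp_of_nonneg (show (0 : ℝ) ≤ 9 / 20 by norm_num)
    have h3 : Real.exp (49 / 20) = Real.exp 1 * Real.exp 1 * Real.exp (9 / 20) := by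
      rw [← Real.exp_add, ← Real.exp_add]; norm_num
    have h4 : (100 / 9 : ℝ) ≤ Real.exp (49 / 20) := by
      rw [h3]
      calc (100 / 9 : ℝ) ≤ 2.71 * 2.71 * (1.55) := by norm_num
        _ ≤ _ := by gcongr <;> linarith
    rw [Real.exp_neg]
    exact (inv_anti₀ (by norm_num) h4).trans (by norm_num)
  have hlog := Real.log_two_lt_d9
  calc Real.exp (-8 * (n : ℝ) * ε ^ 2)
      ≤ Real.exp (-(49 / 20) + n * -(2 * Real.log 2 * (4 * ε ^ 2))) := by
        apply Real.exp_le_exp.2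
        nlinarith
    _ = Real.exp (-(49 / 20)) * Real.exp (n * -(2 * Real.log 2 * (4 * ε ^ 2))) := Real.exp_add _ _
    _ ≤ _ := by gcongr

/-- The event contains the atoms given by the indicator vectors of the sets in `minority n`. -/
lemma weight_le_prob (n : ℕ) (p q : ℝ) (hp : 0 < p) (hq : 0 < q)
    (μ : Measure ℝ) [IsProbabilityMeasure μ]
    (h1 : μ {1} = ENNReal.ofReal p) (h0 : μ {0} = ENNReal.ofReal q) :
    ∑ s ∈ minority n, p ^ s.card * q ^ (n - s.card) ≤
      ((Measure.pi fun _ : Fin n => μ) {Y | (∑ i, Y i) / (n : ℝ) < 1 / 2}).toReal := by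
  classical
  let f : Finset (Fin n) → Fin n → ℝ := fun s i => if i ∈ s then 1 else 0
  have hf : Function.Injective f := by
    intro s t hst
    ext i
    have := congrFun hst i
    by_cases hs : i ∈ s <;> by_cases ht : i ∈ t <;> simp_all [f]
  have hw : ∀ s, (Measure.pi fun _ : Fin n => μ).real {f s} = p ^ s.card * q ^ (n - s.card) := by
    intro s
    have hi : ∀ i, (μ {f s i}).toReal = if i ∈ s then p else q := by
      intro i
      by_cases h : i ∈ s <;> simp [f, h, h1, h0, hp.le, hq.le]
    rw [Measure.real, Measure.pi_singleton, ENNReal.toReal_prod,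
      Finset.prod_congr rfl fun i _ => hi i, Finset.prod_ite, Finset.prod_const, Finset.prod_const, Finset.filter_mem_eq_inter,
      Finset.univ_inter, Finset.filter_not, Finset.filter_mem_eq_inter, Finset.univ_inter,
      ← Finset.compl_eq_univ_sdiff, Finset.card_compl, Fintype.card_fin]
  calc ∑ s ∈ minority n, p ^ s.card * q ^ (n - s.card)
      = ∑ s ∈ minority n, (Measure.pi fun _ : Fin n => μ).real {f s} :=
        Finset.sum_congr rfl fun s _ => (hw s).symm
    _ = ∑ y ∈ (minority n).image f, (Measure.pi fun _ : Fin n => μ).real {y} :=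
        by
        rw [Finset.sum_image hf.injOn]
    _ = (Measure.pi fun _ : Fin n => μ).real ((minority n).image f : Finset (Fin n → ℝ)) :=
        sum_measureReal_singleton _
    _ ≤ (Measure.pi fun _ : Fin n => μ).real {Y | (∑ i, Y i) / (n : ℝ) < 1 / 2} := by
        apply measureReal_mono _ (measure_ne_top _ _)
        intro y hy
        simp only [Finset.coe_image, Set.mem_image, Finset.mem_coe] at hy
        obtain ⟨s, hs, rfl⟩ := hy
        have hs' : 2 * s.card < n := by simpa [minority] using hs
        have hs'' : 2 * (s.card : ℝ) < n := by exact_mod_cast hs'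
        have hn : (0 : ℝ) < n := by exact_mod_cast (by omega : 0 < n)
        have hsum : ∑ i, f s i = s.card := by simp [f]
        rw [Set.mem_ofPred_eq, hsum, div_lt_iff₀ hn]
        linarith

/-- **Lower bound for the excess risk of ERM** (Section 4): let `0 < ε ≤ 1/√8` and
`n ≥ ε⁻²`. If `Y₁, …, Yₙ` are i.i.d. Bernoulli with `Pr{Yᵢ = 1} = 1/2 + ε` and
`Pr{Yᵢ = 0} = 1/2 - ε`, then `Pr{ (1/n)∑ Yᵢ < 1/2 } ≥ exp(-8nε²)`.  Since this is exactly
the probability that ERM over `{c_{1/2}, b_{1/2+ε}}` selects the inferior hypothesis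
`b_{1/2+ε}` (whose excess risk is `ε`), the excess risk of ERM is at least
`ε = √(ln(1/δ)/(8n))` with probability at least `δ = exp(-8nε²)`. -/
theorem erm_excess_risk_lower_bound (ε : ℝ) (hε0 : 0 < ε) (hε : ε ≤ 1 / Real.sqrt 8)
    (n : ℕ) (hn : ε⁻¹ ^ 2 ≤ (n : ℝ))
    (μ : Measure ℝ) [IsProbabilityMeasure μ]
    (h1 : μ {1} = ENNReal.ofReal (1 / 2 + ε))
    (h0 : μ {0} = ENNReal.ofReal (1 / 2 - ε)) :
    Real.exp (-8 * (n : ℝ) * ε ^ 2) ≤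
      ((Measure.pi fun _ : Fin n => μ)
        {Y | (∑ i, Y i) / (n : ℝ) < 1 / 2}).toReal ∧
    ε = Real.sqrt (Real.log (1 / Real.exp (-8 * (n : ℝ) * ε ^ 2)) / (8 * (n : ℝ))) := by
  have h8 : ε ^ 2 ≤ 1 / 8 := by
    have h := pow_le_pow_left₀ hε0.le hε 2
    rwa [div_pow, Real.sq_sqrt (by norm_num), one_pow] at h
  have hn1 : 1 ≤ n * ε ^ 2 := by
    rwa [inv_pow, inv_le_iff_one_le_mul₀ (by positivity)] at hn
  have hn8 : 8 ≤ n := by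
    have : (8 : ℝ) ≤ n := by nlinarith [(Nat.cast_nonneg n : (0 : ℝ) ≤ n)]
    exact_mod_cast this
  have hn0 : (0 : ℝ) < n := by exact_mod_cast (by omega : 0 < n)
  refine ⟨?_, ?_⟩
  · have hq : 0 < 1 / 2 - ε := by nlinarith
    have hcard : (3 / 10 * 2 ^ n : ℝ) ≤ (minority n).card := by
      have h : (3 * 2 ^ n : ℝ) ≤ 10 * (minority n).card := by exact_mod_cast card_minority n hn8
      linarith
    calc Real.exp (-8 * (n : ℝ) * ε ^ 2) ≤ 9 / 100 * (1 - 4 * ε ^ 2) ^ n := numeric_bound n ε h8 hn1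
      _ = (3 / 10 * 2 ^ n) ^ 2 * ((1 / 2 + ε) * (1 / 2 - ε)) ^ n := by
        rw [show 1 - 4 * ε ^ 2 = 2 * 2 * ((1 / 2 + ε) * (1 / 2 - ε)) by ring, mul_pow, mul_pow]
        ring
      _ ≤ ((minority n).card : ℝ) ^ 2 * ((1 / 2 + ε) * (1 / 2 - ε)) ^ n := by gcongr
      _ ≤ _ := weight_lower_bound n _ _ (by linarith) hq (by ring) _
      _ ≤ _ := weight_le_prob n _ _ (by linarith) hq μ h1 h0
  · rw [one_div, Real.log_inv, Real.log_exp,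
      show -(-8 * (n : ℝ) * ε ^ 2) / (8 * n) = ε ^ 2 by field_simp, Real.sqrt_sq hε0.le]
end
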